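/- For every m >= 3, the 2m-dimensional Lebesgue volume of the boolean quadric polytope P(C_m) equals m * A_{2m-1} / (2^m * (2m)!) - 2^(m-2) / (2m)!, where A_{2m-1} is the Euler number counting alternating permutations of {1, ..., 2m-1}. -/

import Mathlib

open MeasureTheory Filter

noncomputable section

/-- The boolean quadric polytope `P(G)` of a graph `G`: the convex hull of the 0/1
points with `y_{ij} = x_i * x_j` for every edge `(i,j)`. -/
def BQPSet {V : Type*} (G : SimpleGraph V) : Set ((V → ℝ) × (↥G.edgeSet → ℝ)) :=
  convexHull ℝ {p | (∀ i, p.1 i = 0 ∨ p.1 i = 1) ∧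
    ∀ (i j : V) (h : G.Adj i j),
      p.2 ⟨s(i, j), (SimpleGraph.mem_edgeSet _).mpr h⟩ = p.1 i * p.1 j}

/-- The Euler number `A k`: the number of alternating permutations `σ` of
`{1, …, k}`, i.e. with `σ 1 > σ 2 < σ 3 > σ 4 < ⋯` (here written 0-indexed). -/
def eulerNumber (k : ℕ) : ℕ :=
  Nat.card {σ : Equiv.Perm (Fin k) //
    ∀ (i : ℕ) (h : i + 1 < k),
      (Even i → σ ⟨i + 1, h⟩ < σ ⟨i, Nat.lt_of_succ_lt h⟩) ∧
      (Odd i → σ ⟨i, Nat.lt_of_succ_lt h⟩ < σ ⟨i + 1, h⟩)}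

/-- The cycle `C_m` with `m` vertices and (for `m ≥ 3`) `m` edges. -/
def cycleG (m : ℕ) : SimpleGraph (Fin m) :=
  SimpleGraph.fromRel (fun i j => ((i : ℕ) + 1) % m = (j : ℕ))

instance (m : ℕ) : DecidableRel (cycleG m).Adj := fun i j =>
  decidable_of_iff _ (SimpleGraph.fromRel_adj _ i j).symm

/-!
In terms of random signs `S i = 1 - 2 X i`, the polytope `P(C_m)` is cut out by the inequalities of
the single edges together with one inequality for each sign pattern `ε` of product `-1`: the
product of the `S i * S (i + 1)` around the cycle is `1`, so at least one of them differs from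
`ε i`. Conversely, a point that satisfies these inequalities is a mixture of vertices: a chord
splits the cycle into a shorter cycle and a triangle, its correlation can be chosen so that both
satisfy their inequalities, and the laws obtained for the two pieces are glued along the chord.

Hence `P(C_m)` is the polytope of the edge inequalities minus `2 ^ (m - 1)` caps. The caps are
pairwise disjoint simplices, each of volume `1 / (2 * (2m)!)` because the linear part of the map
onto a corner simplex comes from a twisted cyclic difference operator of determinant `2`.

The edge inequalities say that `max 0 (x i + x (i + 1) - 1) ≤ y i ≤ min (x i) (x (i + 1))`, and
this interval has length half of `min (T (x i)) (T (x (i + 1)))` for the tent map `T`. As `T`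
preserves Lebesgue measure, the volume is `2 ^ (-m)` times that of the order polytope of a cyclic
zigzag poset. A linear extension of this poset, cut open at the extremal element, one of the `m`
vertices `x i`, is an alternating permutation of the remaining `2m - 1` elements.
-/

section OrderSimplex

variable {ι κ : Type*} {N : ℕ}

/-- The points of the open unit cube whose coordinates, listed in the order `σ.symm 0`,
`σ.symm 1`, …, strictly decrease. -/
def orderSimplex (σ : ι ≃ Fin N) : Set (ι → ℝ) :=
  {w | (∀ i, w i ∈ Set.Ioo 0 1) ∧ StrictAnti (w ∘ σ.symm)}

lemma apply_lt_apply_iff_of_mem_orderSimplex {σ : ι ≃ Fin N} {w : ι → ℝ}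
    (hw : w ∈ orderSimplex σ) (i j : ι) : w i < w j ↔ σ j < σ i := by
  simpa using hw.2.lt_iff_gt (a := σ i) (b := σ j)

lemma pairwise_disjoint_orderSimplex :
    Pairwise (Function.onFun Disjoint (orderSimplex (ι := ι) (N := N))) := by
  intro σ τ hne
  refine Set.disjoint_left.2 fun w hσ hτ => hne ?_
  have hrange : Set.range (w ∘ σ.symm) = Set.range (w ∘ τ.symm) := by
    simp only [EquivLike.range_comp]
  have hcomp : w ∘ σ.symm = w ∘ τ.symm := (StrictAnti.range_inj hσ.2 hτ.2).1 hrange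
  have hinj : Function.Injective w := (Equiv.injective_comp σ.symm w).1 hσ.2.injective
  exact Equiv.symm_bijective.injective <| Equiv.ext fun a => hinj (congrFun hcomp a)

lemma preimage_orderSimplex (e : ι ≃ κ) (σ : ι ≃ Fin N) :
    (fun (w : κ → ℝ) i => w (e i)) ⁻¹' orderSimplex σ = orderSimplex (e.symm.trans σ) := by
  ext w
  exact and_congr (e.forall_congr_left (p := fun i => w (e i) ∈ Set.Ioo 0 1) |>.trans
    (by simp only [Equiv.apply_symm_apply])) Iff.rfl

lemma measurableSet_orderSimplex [Countable ι] (σ : ι ≃ Fin N) :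
    MeasurableSet (orderSimplex σ) := by
  have hpi : MeasurableSet {w : ι → ℝ | ∀ i, w i ∈ Set.Ioo 0 1} := by measurability
  have hlt : ∀ a b, MeasurableSet {w : ι → ℝ | a < b → w (σ.symm b) < w (σ.symm a)} := fun a b =>
    (MeasurableSet.const _).imp (measurableSet_lt (measurable_pi_apply _) (measurable_pi_apply _))
  convert hpi.inter (MeasurableSet.iInter fun a => MeasurableSet.iInter fun b => hlt a b) using 1
  ext w
  simp only [orderSimplex, StrictAnti, Set.mem_inter_iff, Set.mem_iInter, Set.mem_ofPred_eq,
    Function.comp_apply]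

lemma measurePreserving_comp_equiv [Fintype ι] [Fintype κ] (e : ι ≃ κ) :
    MeasurePreserving (fun (w : κ → ℝ) i => w (e i)) volume volume :=
  (volume_measurePreserving_piCongrLeft (fun _ => ℝ) e).symm

variable [Fintype ι]

lemma volume_setOf_apply_eq_apply {i j : ι} (h : i ≠ j) :
    volume {w : ι → ℝ | w i = w j} = 0 := by
  classical
  let S : Submodule ℝ (ι → ℝ) :=
    LinearMap.eqLocus (LinearMap.proj i : (ι → ℝ) →ₗ[ℝ] ℝ) (LinearMap.proj j)
  refine Measure.addHaar_submodule volume S fun htop => ?_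
  have : (Pi.single i 1 : ι → ℝ) ∈ S := htop ▸ Submodule.mem_top
  simp [S, h] at this

lemma ae_injective : ∀ᵐ w : ι → ℝ, Function.Injective w := by
  have hne : ∀ᵐ w : ι → ℝ, ∀ i j, i ≠ j → w i ≠ w j := by
    simp only [eventually_all]
    intro i j h
    simpa [ae_iff] using volume_setOf_apply_eq_apply h
  filter_upwards [hne] with w hw i j hij
  exact not_imp_not.1 (hw i j) hij

lemma exists_mem_orderSimplex (hN : Fintype.card ι = N) {w : ι → ℝ}
    (hw : ∀ i, w i ∈ Set.Ioo 0 1) (hinj : Function.Injective w) :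
    ∃ σ : ι ≃ Fin N, w ∈ orderSimplex σ := by
  let e := Fintype.equivFinOfCardEq hN
  let ρ := Tuple.sort fun a => -w (e.symm a)
  refine ⟨e.trans ρ.symm, hw, Antitone.strictAnti_of_injective (fun a b hab => ?_) ?_⟩
  · exact neg_le_neg_iff.1 (Tuple.monotone_sort (fun a => -w (e.symm a)) hab)
  · exact hinj.comp (Equiv.injective _)

lemma volume_orderSimplex_eq (σ τ : ι ≃ Fin N) :
    volume (orderSimplex σ) = volume (orderSimplex τ) := by
  rw [← (measurePreserving_comp_equiv (σ.trans τ.symm)).measure_preimage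
    (measurableSet_orderSimplex σ).nullMeasurableSet, preimage_orderSimplex]
  congr 2
  ext i
  simp

lemma volume_eq_sum_orderSimplex (hN : Fintype.card ι = N) {S : Set (ι → ℝ)}
    {p : (ι ≃ Fin N) → Prop} (hS : S ⊆ Set.Icc 0 1)
    (hp : ∀ σ, ∀ w ∈ orderSimplex σ, w ∈ S ↔ p σ) :
    volume S = ∑' σ : {σ // p σ}, volume (orderSimplex σ.1) := by
  classical
  have hdisj : Pairwise (Function.onFun Disjoint fun σ : {σ // p σ} => orderSimplex σ.1) :=
    fun σ τ h => pairwise_disjoint_orderSimplex (Subtype.coe_ne_coe.2 h)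
  rw [← measure_iUnion hdisj fun σ => measurableSet_orderSimplex σ.1]
  refine measure_congr (eventuallyEq_set.2 ?_)
  filter_upwards [ae_injective (ι := ι),
    eventuallyEq_set.1 (Measure.univ_pi_Ioo_ae_eq_Icc
      (μ := fun _ : ι => (volume : Measure ℝ)) (f := 0) (g := 1))] with w hinj hcube
  rw [Set.mem_iUnion]
  constructor
  · intro hw
    obtain ⟨σ, hσ⟩ := exists_mem_orderSimplex hN (fun i => hcube.2 (hS hw) i trivial) hinj
    exact ⟨⟨σ, (hp σ w hσ).1 hw⟩, hσ⟩
  · rintro ⟨σ, hσ⟩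
    exact (hp σ w hσ).2 σ.2

lemma volume_orderSimplex (hN : Fintype.card ι = N) (σ : ι ≃ Fin N) :
    volume (orderSimplex σ) = (N.factorial : ENNReal)⁻¹ := by
  classical
  have hcube := volume_eq_sum_orderSimplex hN (S := Set.Icc 0 1) (p := fun _ => True) subset_rfl
    fun σ w hw => iff_true_intro ⟨fun i => (hw.1 i).1.le, fun i => (hw.1 i).2.le⟩
  simp only [Real.volume_Icc_pi, volume_orderSimplex_eq _ σ, tsum_fintype] at hcube
  refine ENNReal.eq_inv_of_mul_eq_one_left ?_
  simpa [Fintype.card_equiv (Fintype.equivFinOfCardEq hN), hN, mul_comm] using hcube.symm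

theorem volume_eq_card_div_factorial (hN : Fintype.card ι = N) {S : Set (ι → ℝ)}
    {p : (ι ≃ Fin N) → Prop} (hS : S ⊆ Set.Icc 0 1)
    (hp : ∀ σ, ∀ w ∈ orderSimplex σ, w ∈ S ↔ p σ) :
    volume S = Nat.card {σ // p σ} / (N.factorial : ENNReal) := by
  classical
  rw [volume_eq_sum_orderSimplex hN hS hp, tsum_fintype, Nat.card_eq_fintype_card]
  simp [volume_orderSimplex hN, div_eq_mul_inv]

end OrderSimplex

section CyclicDiff

variable {R : Type*} [CommRing R] {n : ℕ}

/-- The twisted difference operator along a cycle, `x ↦ (x i - e i * x (i + 1))ᵢ`; addition in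
`Fin (n + 1)` is cyclic. -/
def cyclicDiff (e : Fin (n + 1) → R) : (Fin (n + 1) → R) →ₗ[R] (Fin (n + 1) → R) :=
  LinearMap.pi fun i => LinearMap.proj i - e i • LinearMap.proj (i + 1)

@[simp]
lemma cyclicDiff_apply (e x : Fin (n + 1) → R) (i : Fin (n + 1)) :
    cyclicDiff e x i = x i - e i * x (i + 1) := by
  simp [cyclicDiff]

lemma prod_Ioi_eq_ite (e : Fin (n + 1) → R) (i : Fin (n + 1)) :
    ∏ j ∈ Finset.Ioi i, e j = if i + 1 = 0 then 1 else ∏ j ∈ Finset.Ici (i + 1), e j := by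
  rcases eq_or_ne i (Fin.last n) with rfl | hi
  · rw [if_pos (Fin.last_add_one n), ← Fin.top_eq_last, Finset.Ioi_top, Finset.prod_empty]
  · have hlt : i < i + 1 := Fin.lt_add_one_iff.2 (Fin.lt_last_iff_ne_last.2 hi)
    rw [if_neg (Fin.pos_iff_ne_zero.1 ((Fin.zero_le i).trans_lt hlt))]
    refine Finset.prod_congr (Finset.ext fun j => ?_) fun _ _ => rfl
    rw [Finset.mem_Ioi, Finset.mem_Ici, Fin.lt_def, Fin.le_def, Fin.val_add_one_of_lt
      (Fin.lt_last_iff_ne_last.2 hi), Nat.succ_le_iff]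

lemma toMatrix'_cyclicDiff_apply (e : Fin (n + 1) → R) (i j : Fin (n + 1)) :
    LinearMap.toMatrix' (cyclicDiff e) i j =
      (if i = j then 1 else 0) - e i * (if i + 1 = j then 1 else 0) := by
  simp [LinearMap.toMatrix'_apply, Pi.single_apply]

lemma add_one_ne_of_le {i j : Fin (n + 1)} (hj : j ≠ 0) (hji : j ≤ i) : i + 1 ≠ j := by
  rintro rfl
  have hi : i ≠ Fin.last n := fun h => hj (h ▸ Fin.last_add_one n)
  exact hji.not_gt (Fin.lt_add_one_iff.2 (Fin.lt_last_iff_ne_last.2 hi))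

lemma det_updateCol_cyclicDiff (e : Fin (n + 1) → R) :
    ((LinearMap.toMatrix' (cyclicDiff e)).updateCol 0 (Pi.single 0 1)).det = 1 := by
  rw [Matrix.det_of_isUpperTriangular]
  · refine Finset.prod_eq_one fun i _ => ?_
    rcases eq_or_ne i 0 with rfl | hi
    · simp
    · simp only [Matrix.updateCol_ne hi, toMatrix'_cyclicDiff_apply, if_pos,
        if_neg (add_one_ne_of_le hi le_rfl), mul_zero, sub_zero]
  · intro i j hji
    have hji : j < i := hji
    rcases eq_or_ne j 0 with rfl | hj
    · simp [hji.ne']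
    · simp only [Matrix.updateCol_ne hj, toMatrix'_cyclicDiff_apply, if_neg hji.ne',
        if_neg (add_one_ne_of_le hj hji.le), mul_zero, sub_zero]

/-- Column operations turn the first column of the matrix into `(1 - ∏ i, e i, 0, …, 0)`, after
which it is upper triangular. -/
lemma det_cyclicDiff (e : Fin (n + 1) → R) : LinearMap.det (cyclicDiff e) = 1 - ∏ i, e i := by
  let A := LinearMap.toMatrix' (cyclicDiff e)
  let c : Fin (n + 1) → R := fun i => if i = 0 then 1 else ∏ j ∈ Finset.Ici i, e j
  have hA : ∀ i j, A i j = (if i = j then 1 else 0) - e i * (if i + 1 = j then 1 else 0) :=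
    toMatrix'_cyclicDiff_apply e
  have hAc : (fun i => ∑ j, c j • A i j) = (1 - ∏ i, e i) • Pi.single 0 1 := by
    funext i
    have hmul : ∑ j, c j • A i j = c i - e i * c (i + 1) := by
      simp [hA, mul_sub, Finset.sum_sub_distrib, mul_comm]
    have hprod : ∏ j ∈ Finset.Ici i, e j = e i * c (i + 1) := by
      rw [← Finset.mul_prod_Ioi_eq_prod_Ici, prod_Ioi_eq_ite]
    rw [hmul, ← hprod]
    rcases eq_or_ne i 0 with rfl | hi
    · simp [c, ← bot_eq_zero]
    · simp [c, hi]
  calc LinearMap.det (cyclicDiff e) = A.det := (LinearMap.det_toMatrix' _).symm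
    _ = (A.updateCol 0 fun i => ∑ j, c j • A i j).det := by
      rw [Matrix.det_updateCol_sum]
      simp [c]
    _ = 1 - ∏ i, e i := by
      rw [hAc, Matrix.det_updateCol_smul, det_updateCol_cyclicDiff, mul_one]

end CyclicDiff

section CornerSimplex

variable {ι κ : Type*} [Fintype ι] [Fintype κ]

lemma measurePreserving_sumElim :
    MeasurePreserving (fun p : (ι → ℝ) × (κ → ℝ) => Sum.elim p.1 p.2) volume volume := by
  convert (volume_measurePreserving_sumPiEquivProdPi fun _ : ι ⊕ κ => ℝ).symm using 1
  ext p (i | i) <;> rfl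

/-- The half-open simplex spanned by the origin and the standard basis. -/
def cornerSimplex (ι : Type*) [Fintype ι] : Set (ι → ℝ) :=
  {a | (∀ i, 0 ≤ a i) ∧ ∑ i, a i < 1}

lemma measurableSet_cornerSimplex : MeasurableSet (cornerSimplex ι) := by
  refine MeasurableSet.inter ?_ (measurableSet_lt
    (Finset.measurable_sum _ fun i _ => measurable_pi_apply i) measurable_const)
  exact measurableSet_setOfPred.2 <| Measurable.forall fun i =>
    measurableSet_setOfPred.1 <| measurableSet_le measurable_const (measurable_pi_apply i)

lemma sum_cyclicDiff {n : ℕ} (x : Fin (n + 1) → ℝ) :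
    ∑ i, cyclicDiff (Fin.snoc (fun _ => 1) 0) x i = x 0 := by
  have hlast := Fin.sum_univ_castSucc x
  have hfirst := Fin.sum_univ_succ x
  simp only [cyclicDiff_apply, Fin.sum_univ_castSucc, Fin.snoc_castSucc, Fin.snoc_last,
    Fin.coeSucc_eq_succ, Finset.sum_sub_distrib, one_mul, zero_mul]
  linarith

lemma volume_antitone_unitInterval (n : ℕ) :
    volume {w : Fin (n + 1) → ℝ | Antitone w ∧ 0 ≤ w (Fin.last n) ∧ w 0 < 1} =
      ((n + 1).factorial : ENNReal)⁻¹ := by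
  rw [volume_eq_card_div_factorial (Fintype.card_fin (n + 1)) (p := fun σ => σ = Equiv.refl _),
    Nat.card_unique, Nat.cast_one, one_div]
  · rintro w ⟨hanti, hlast, hzero⟩
    exact ⟨fun i => hlast.trans (hanti (Fin.le_last i)),
      fun i => (hanti (Fin.zero_le i)).trans hzero.le⟩
  · intro σ w hw
    constructor
    · rintro ⟨hanti, -⟩
      have hmono : StrictMono σ := fun i j hij => lt_of_le_of_ne
        (not_lt.1 fun h => (hanti hij.le).not_gt
          ((apply_lt_apply_iff_of_mem_orderSimplex hw i j).2 h)) (σ.injective.ne hij.ne)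
      exact Equiv.coe_fn_injective ((hmono.range_inj strictMono_id).1 (by simp))
    · rintro rfl
      exact ⟨hw.2.antitone, (hw.1 _).1.le, (hw.1 _).2⟩

lemma volume_cornerSimplex_fin_succ (n : ℕ) :
    volume (cornerSimplex (Fin (n + 1))) = ((n + 1).factorial : ENNReal)⁻¹ := by
  have hdet : LinearMap.det (cyclicDiff (Fin.snoc (fun _ : Fin n => (1 : ℝ)) 0)) = 1 := by
    rw [det_cyclicDiff, Finset.prod_eq_zero (Finset.mem_univ (Fin.last n)) (by simp), sub_zero]
  have hpre : cyclicDiff (Fin.snoc (fun _ => 1) 0) ⁻¹' cornerSimplex (Fin (n + 1)) =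
      {w : Fin (n + 1) → ℝ | Antitone w ∧ 0 ≤ w (Fin.last n) ∧ w 0 < 1} := by
    ext w
    simp only [cornerSimplex, Set.mem_preimage, Set.mem_ofPred_eq, sum_cyclicDiff,
      Fin.forall_fin_succ', Fin.antitone_iff_succ_le]
    simp [and_assoc]
  rw [← volume_antitone_unitInterval, ← hpre,
    Measure.addHaar_preimage_linearMap volume (hdet.symm ▸ one_ne_zero), hdet]
  simp

theorem volume_cornerSimplex :
    volume (cornerSimplex ι) = ((Fintype.card ι).factorial : ENNReal)⁻¹ := by
  have hpre : (fun (a : ι → ℝ) k => a ((Fintype.equivFin ι).symm k)) ⁻¹' cornerSimplex _ =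
      cornerSimplex ι := by
    ext a
    simp only [cornerSimplex, Set.mem_preimage, Set.mem_ofPred_eq, Equiv.sum_comp,
      Equiv.forall_congr_left (Fintype.equivFin ι)]
  rw [← hpre, (measurePreserving_comp_equiv _).measure_preimage
    measurableSet_cornerSimplex.nullMeasurableSet]
  cases Fintype.card ι with
  | zero => simp [cornerSimplex, volume_pi]
  | succ n => exact volume_cornerSimplex_fin_succ n

end CornerSimplex

section SignedSums

open Fin.NatCast

/-- The inequalities between the means `a = E X`, `b = E Y` and the correlation `c = E (X Y)` of
two random signs: `1 + σ a + τ b + σ τ c` is four times the probability of `(X, Y) = (σ, τ)`. -/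
def IsPairMoment (a b c : ℝ) : Prop :=
  ∀ σ τ : ℤˣ, 0 ≤ 1 + (σ : ℤ) * a + (τ : ℤ) * b + (σ : ℤ) * (τ : ℤ) * c

lemma forall_intUnits {p : ℤˣ → Prop} : (∀ σ, p σ) ↔ p 1 ∧ p (-1) :=
  ⟨fun h => ⟨h 1, h (-1)⟩, fun h σ => (Int.units_eq_one_or σ).elim (· ▸ h.1) (· ▸ h.2)⟩

lemma sum_intUnits (f : ℤˣ → ℝ) : ∑ σ, f σ = f 1 + f (-1) := by
  rw [UnitsInt.univ, Finset.sum_pair (by decide)]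

lemma isPairMoment_iff {a b c : ℝ} : IsPairMoment a b c ↔
    0 ≤ 1 + a + b + c ∧ 0 ≤ 1 + a - b - c ∧ 0 ≤ 1 - a + b - c ∧ 0 ≤ 1 - a - b + c := by
  simp only [IsPairMoment, forall_intUnits, Units.val_one, Units.val_neg, Int.cast_one,
    Int.cast_neg, one_mul, neg_mul, mul_neg, ← sub_eq_add_neg, and_assoc, sub_neg_eq_add]

lemma IsPairMoment.symm {a b c : ℝ} (h : IsPairMoment a b c) : IsPairMoment b a c := by
  obtain ⟨h₁, h₂, h₃, h₄⟩ := isPairMoment_iff.1 h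
  refine isPairMoment_iff.2 ⟨?_, ?_, ?_, ?_⟩ <;> linarith

lemma IsPairMoment.abs_le_one {a b c : ℝ} (h : IsPairMoment a b c) : |a| ≤ 1 := by
  obtain ⟨h₁, h₂, h₃, h₄⟩ := isPairMoment_iff.1 h
  exact abs_le.2 ⟨by linarith, by linarith⟩

lemma IsPairMoment.rotate {a b c : ℝ} (h : IsPairMoment a b c) : IsPairMoment b c a := by
  obtain ⟨h₁, h₂, h₃, h₄⟩ := isPairMoment_iff.1 h
  refine isPairMoment_iff.2 ⟨?_, ?_, ?_, ?_⟩ <;> linarith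

lemma IsPairMoment.abs_sub_mul_le {a b c : ℝ} (h : IsPairMoment a b c) (σ : ℤˣ) :
    |a - (σ : ℤ) * b| ≤ 1 - (σ : ℤ) * c := by
  obtain ⟨h₁, h₂, h₃, h₄⟩ := isPairMoment_iff.1 h
  rcases Int.units_eq_one_or σ with rfl | rfl <;> refine abs_le.2 ⟨?_, ?_⟩ <;>
    push_cast <;> linarith

lemma isPairMoment_iff_abs {a b c : ℝ} : IsPairMoment a b c ↔
    ∀ σ : ℤˣ, |a - (σ : ℤ) * b| ≤ 1 - (σ : ℤ) * c := by
  simp only [isPairMoment_iff, forall_intUnits, abs_le, Units.val_one, Units.val_neg, Int.cast_one,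
    Int.cast_neg, one_mul, neg_mul, sub_neg_eq_add]
  constructor
  · rintro ⟨h₁, h₂, h₃, h₄⟩
    refine ⟨⟨?_, ?_⟩, ?_, ?_⟩ <;> linarith
  · rintro ⟨⟨h₁, h₂⟩, h₃, h₄⟩
    refine ⟨?_, ?_, ?_, ?_⟩ <;> linarith

lemma abs_sub_prod_mul_le {s d : ℕ → ℝ} {ε : ℕ → ℤˣ} (k : ℕ)
    (h : ∀ j < k, |s j - (ε j : ℤ) * s (j + 1)| ≤ d j) :
    |s 0 - ((∏ j ∈ Finset.range k, ε j : ℤˣ) : ℤ) * s k| ≤ ∑ j ∈ Finset.range k, d j := by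
  induction k with
  | zero => simp
  | succ k ih =>
    have hlast := h k k.lt_succ_self
    rw [Finset.prod_range_succ, Finset.sum_range_succ]
    set η := ∏ j ∈ Finset.range k, ε j
    have hη : |((η : ℤ) : ℝ)| = 1 := by
      rcases Int.units_eq_one_or η with h | h <;> simp [h]
    calc |s 0 - ((η * ε k : ℤˣ) : ℤ) * s (k + 1)|
        = |(s 0 - (η : ℤ) * s k) + (η : ℤ) * (s k - (ε k : ℤ) * s (k + 1))| := by
          push_cast; ring_nf
      _ ≤ |s 0 - (η : ℤ) * s k| + |(η : ℤ) * (s k - (ε k : ℤ) * s (k + 1))| := abs_add_le _ _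
      _ ≤ ∑ j ∈ Finset.range k, d j + d k := by
          rw [abs_mul, hη, one_mul]
          exact add_le_add (ih fun j hj => h j (hj.trans k.lt_succ_self)) hlast

variable {n : ℕ}

lemma add_one_add_last (i : Fin (n + 1)) : i + 1 + Fin.last n = i := by
  rw [add_assoc, add_comm 1, Fin.last_add_one, add_zero]

@[to_additive]
lemma prod_univ_erase_eq_prod_range {M : Type*} [CommGroup M] (f : Fin (n + 1) → M)
    (i : Fin (n + 1)) :
    ∏ j ∈ Finset.univ.erase i, f j = ∏ t ∈ Finset.range n, f (i + 1 + (t : Fin (n + 1))) := by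
  have htotal : ∏ t ∈ Finset.range (n + 1), f (i + 1 + (t : Fin (n + 1))) = ∏ j, f j := by
    rw [Finset.prod_range, ← Equiv.prod_comp (Equiv.addLeft (i + 1)) f]
    simp only [Fin.cast_val_eq_self, Equiv.coe_addLeft]
  rw [Finset.prod_range_succ, Fin.natCast_eq_last, add_one_add_last,
    ← Finset.prod_erase_mul _ _ (Finset.mem_univ i)] at htotal
  exact (mul_right_cancel htotal).symm

lemma abs_sub_prod_erase_mul_le {s d : Fin (n + 1) → ℝ} {ε : Fin (n + 1) → ℤˣ}
    (h : ∀ j, |s j - (ε j : ℤ) * s (j + 1)| ≤ d j) (i : Fin (n + 1)) :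
    |s (i + 1) - ((∏ j ∈ Finset.univ.erase i, ε j : ℤˣ) : ℤ) * s i| ≤
      ∑ j ∈ Finset.univ.erase i, d j := by
  rw [prod_univ_erase_eq_prod_range, sum_univ_erase_eq_sum_range]
  have := abs_sub_prod_mul_le (s := fun t => s (i + 1 + (t : Fin (n + 1))))
    (d := fun t => d (i + 1 + (t : Fin (n + 1)))) (ε := fun t => ε (i + 1 + (t : Fin (n + 1)))) n
    fun t _ => by simpa [add_assoc] using h (i + 1 + t)
  simpa [add_one_add_last] using this

end SignedSums

section Cycle

/-- Coordinates for the boolean quadric polytope of a cycle: `p.1 i` belongs to the vertex `i` and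
`p.2 i` to the edge from `i` to `i + 1`. -/
abbrev CyclePoint (n : ℕ) := (Fin (n + 1) → ℝ) × (Fin (n + 1) → ℝ)

variable {n : ℕ}

/-- The mean of the sign `S i = 1 - 2 X i` when `p.1 i` is the probability of `X i = 1`. -/
def spinMean (p : CyclePoint n) (i : Fin (n + 1)) : ℝ := 1 - 2 * p.1 i

/-- The mean of `S i * S (i + 1)` for the signs `S i = 1 - 2 X i`, when `p.1 i` is the probability
of `X i = 1` and `p.2 i` that of `X i = X (i + 1) = 1`. -/
def edgeCorr (p : CyclePoint n) (i : Fin (n + 1)) : ℝ :=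
  1 - 2 * p.1 i - 2 * p.1 (i + 1) + 4 * p.2 i

/-- Twice the expected number of edges on which `S i * S (i + 1)` differs from `ε i`. -/
def disagreement (ε : Fin (n + 1) → ℤˣ) (p : CyclePoint n) : ℝ :=
  ∑ i, (1 - (ε i : ℤ) * edgeCorr p i)

/-- The polytope cut out by the inequalities that involve a single edge. -/
def edgeRelaxation (n : ℕ) : Set (CyclePoint n) :=
  {p | ∀ i, IsPairMoment (spinMean p i) (spinMean p (i + 1)) (edgeCorr p i)}

/-- The part of the edge relaxation that violates the cycle inequality of `ε`. -/
def cyclicCap (ε : Fin (n + 1) → ℤˣ) : Set (CyclePoint n) :=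
  {p | p ∈ edgeRelaxation n ∧ disagreement ε p < 2}

/-- The polytope cut out by the edge inequalities and the cycle inequalities: a product of signs
`S i * S (i + 1)` around the cycle is `1`, hence differs from an `ε` of product `-1` somewhere. -/
def cyclePolytope (n : ℕ) : Set (CyclePoint n) :=
  {p | p ∈ edgeRelaxation n ∧ ∀ ε : Fin (n + 1) → ℤˣ, ∏ i, ε i = -1 → 2 ≤ disagreement ε p}

lemma mem_edgeRelaxation_iff {p : CyclePoint n} : p ∈ edgeRelaxation n ↔
    ∀ i, max 0 (p.1 i + p.1 (i + 1) - 1) ≤ p.2 i ∧ p.2 i ≤ min (p.1 i) (p.1 (i + 1)) := by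
  refine forall_congr' fun i => ?_
  simp only [isPairMoment_iff, spinMean, edgeCorr, max_le_iff, le_min_iff]
  constructor
  · rintro ⟨h₁, h₂, h₃, h₄⟩
    refine ⟨⟨?_, ?_⟩, ?_, ?_⟩ <;> linarith
  · rintro ⟨⟨h₁, h₂⟩, h₃, h₄⟩
    refine ⟨?_, ?_, ?_, ?_⟩ <;> linarith

/-- The affine coordinates of `p` given by the probabilities of `(S i, ε i * S (i + 1)) = (-1, 1)`
and of `(S i, ε i * S (i + 1)) = (1, -1)`; they carry the cap of `ε` onto a corner simplex. -/
def capCoord (ε : Fin (n + 1) → ℤˣ) (p : CyclePoint n) : CyclePoint n :=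
  (fun i => (1 - spinMean p i + (ε i : ℤ) * spinMean p (i + 1) - (ε i : ℤ) * edgeCorr p i) / 4,
    fun i => (1 + spinMean p i - (ε i : ℤ) * spinMean p (i + 1) - (ε i : ℤ) * edgeCorr p i) / 4)

lemma prod_erase_eq_neg {ε : Fin (n + 1) → ℤˣ} (hε : ∏ i, ε i = -1) (i : Fin (n + 1)) :
    ∏ j ∈ Finset.univ.erase i, ε j = -ε i := by
  rw [← Finset.mul_prod_erase _ _ (Finset.mem_univ i)] at hε
  rw [eq_inv_mul_of_mul_eq hε, Int.units_inv_eq_self, mul_neg_one]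

lemma mem_edgeRelaxation_of_disagreement_lt {ε : Fin (n + 1) → ℤˣ} (hε : ∏ i, ε i = -1)
    {p : CyclePoint n} (hp : disagreement ε p < 2)
    (h : ∀ i, |spinMean p i - (ε i : ℤ) * spinMean p (i + 1)| ≤ 1 - (ε i : ℤ) * edgeCorr p i) :
    p ∈ edgeRelaxation n := by
  refine fun i => isPairMoment_iff_abs.2 fun σ => ?_
  rcases eq_or_ne σ (ε i) with rfl | hσ
  · exact h i
  · have htel := abs_sub_prod_erase_mul_le h i
    rw [prod_erase_eq_neg hε] at htel
    rw [disagreement, ← Finset.add_sum_erase _ _ (Finset.mem_univ i)] at hp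
    rw [Int.units_ne_iff_eq_neg.1 hσ]
    rcases Int.units_eq_one_or (ε i) with hi | hi <;> rw [hi] at htel hp ⊢ <;>
      push_cast at htel hp ⊢ <;> rw [abs_le] at htel ⊢ <;> constructor <;> linarith

lemma cyclicCap_eq_preimage {ε : Fin (n + 1) → ℤˣ} (hε : ∏ i, ε i = -1) :
    cyclicCap ε = capCoord ε ⁻¹' ((fun p : CyclePoint n => Sum.elim p.1 p.2) ⁻¹'
      cornerSimplex (Fin (n + 1) ⊕ Fin (n + 1))) := by
  ext p
  have hsum : disagreement ε p = 2 * ∑ i, ((capCoord ε p).1 i + (capCoord ε p).2 i) := by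
    rw [disagreement, Finset.mul_sum]
    exact Finset.sum_congr rfl fun i _ => by simp only [capCoord]; ring
  have habs : ∀ i, |spinMean p i - (ε i : ℤ) * spinMean p (i + 1)| ≤ 1 - (ε i : ℤ) * edgeCorr p i ↔
      0 ≤ (capCoord ε p).1 i ∧ 0 ≤ (capCoord ε p).2 i := by
    intro i
    simp only [capCoord, abs_le]
    constructor <;> rintro ⟨h₁, h₂⟩ <;> constructor <;> linarith
  have hcap : p ∈ cyclicCap ε ↔
      (∀ i, 0 ≤ (capCoord ε p).1 i ∧ 0 ≤ (capCoord ε p).2 i) ∧ disagreement ε p < 2 := by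
    simp only [← habs]
    exact ⟨fun h => ⟨fun i => (h.1 i).abs_sub_mul_le (ε i), h.2⟩,
      fun h => ⟨mem_edgeRelaxation_of_disagreement_lt hε h.2 h.1, h.2⟩⟩
  simp only [hcap, cornerSimplex, Set.mem_preimage, Set.mem_ofPred_eq, Sum.forall, Sum.elim_inl,
    Sum.elim_inr, Fintype.sum_sum_type, ← Finset.sum_add_distrib, hsum, forall_and]
  refine and_congr_right fun _ => ?_
  constructor <;> intro <;> linarith

lemma map_sub_linearMap_volume {ι : Type*} [Fintype ι] (v : ι → ℝ) {f : (ι → ℝ) →ₗ[ℝ] (ι → ℝ)}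
    (hf : LinearMap.det f ≠ 0) :
    Measure.map (fun x => v - f x) volume =
      ENNReal.ofReal |(LinearMap.det f)⁻¹| • (volume : Measure (ι → ℝ)) := by
  rw [← Function.comp_def (fun x => v - x) f, ← Measure.map_map (by fun_prop)
    f.continuous_of_finiteDimensional.measurable,
    Measure.map_linearMap_addHaar_eq_smul_addHaar _ hf, Measure.map_smul,
    (Measure.measurePreserving_sub_left volume v).map_eq]

lemma measurePreserving_sub_units_mul {ι : Type*} [Fintype ι] (ε : ι → ℤˣ) (v : ι → ℝ) :
    MeasurePreserving (fun (y : ι → ℝ) i => v i - (ε i : ℤ) * y i) volume volume := by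
  refine volume_preserving_pi (f := fun i t => v i - (ε i : ℤ) * t) fun i => ?_
  rcases Int.units_eq_one_or (ε i) with hi | hi
  · simpa [hi] using Measure.measurePreserving_sub_left volume (v i)
  · simpa [hi] using measurePreserving_add_left volume (v i)

lemma measurePreserving_capCoord {ε : Fin (n + 1) → ℤˣ} (hε : ∏ i, ε i = -1) :
    MeasurePreserving (capCoord ε) volume
      ((volume : Measure (Fin (n + 1) → ℝ)).prod ((2 : ENNReal)⁻¹ • volume)) := by
  let D := cyclicDiff fun i => ((ε i : ℤ) : ℝ)
  have hdet : LinearMap.det D = 2 := by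
    rw [det_cyclicDiff, ← Int.cast_prod, ← Units.coe_prod, hε]
    norm_num
  have hfst : MeasurePreserving (fun p : CyclePoint n =>
      (p.1, fun i => (1 + (ε i : ℤ)) / 2 * p.1 i - (ε i : ℤ) * p.2 i))
      (volume.prod volume) (volume.prod volume) :=
    (MeasurePreserving.id volume).skew_product
      (g := fun (x y : Fin (n + 1) → ℝ) i => (1 + (ε i : ℤ)) / 2 * x i - (ε i : ℤ) * y i)
      (by fun_prop) (.of_forall fun x => (measurePreserving_sub_units_mul ε _).map_eq)
  have hsnd : MeasurePreserving (fun p : CyclePoint n =>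
      (p.1, (fun i => p.1 i + (1 - (ε i : ℤ)) / 2) - D p.2))
      (volume.prod volume) (volume.prod ((2 : ENNReal)⁻¹ • volume)) := by
    refine (MeasurePreserving.id volume).skew_product
      (g := fun (b x : Fin (n + 1) → ℝ) => (fun i => b i + (1 - (ε i : ℤ)) / 2) - D x)
      (Measurable.sub (by fun_prop) (D.continuous_of_finiteDimensional.measurable.comp
        measurable_snd)) (.of_forall fun b => ?_)
    rw [map_sub_linearMap_volume _ (hdet.trans_ne two_ne_zero), hdet]
    simp [ENNReal.ofReal_inv_of_pos]
  have hcomp := hsnd.comp (Measure.measurePreserving_swap.comp hfst)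
  refine (congrArg (MeasurePreserving · _ _) (funext fun p => ?_)).mp hcomp
  refine Prod.ext (funext fun i => ?_) (funext fun i => ?_) <;>
    rcases Int.units_eq_one_or (ε i) with hi | hi <;>
    simp only [capCoord, spinMean, edgeCorr, Function.comp_apply, Prod.swap, Pi.sub_apply, D,
      cyclicDiff_apply, hi] <;> push_cast <;> ring

lemma volume_cyclicCap {ε : Fin (n + 1) → ℤˣ} (hε : ∏ i, ε i = -1) :
    volume (cyclicCap ε) = 2⁻¹ * ((2 * (n + 1)).factorial : ENNReal)⁻¹ := by
  have hmeas : MeasurableSet ((fun p : CyclePoint n => Sum.elim p.1 p.2) ⁻¹'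
      cornerSimplex (Fin (n + 1) ⊕ Fin (n + 1))) :=
    measurePreserving_sumElim.measurable measurableSet_cornerSimplex
  rw [cyclicCap_eq_preimage hε, (measurePreserving_capCoord hε).measure_preimage
    hmeas.nullMeasurableSet, Measure.prod_smul_right, Measure.smul_apply, smul_eq_mul,
    ← Measure.volume_eq_prod, measurePreserving_sumElim.measure_preimage
    measurableSet_cornerSimplex.nullMeasurableSet, volume_cornerSimplex]
  simp [two_mul]

lemma measurable_edgeCorr (i : Fin (n + 1)) : Measurable fun p : CyclePoint n => edgeCorr p i := by
  unfold edgeCorr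
  fun_prop

lemma measurableSet_edgeRelaxation : MeasurableSet (edgeRelaxation n) := by
  refine measurableSet_setOfPred.2 <| Measurable.forall fun i => Measurable.forall fun σ =>
    Measurable.forall fun τ => measurableSet_setOfPred.1 <| measurableSet_le measurable_const ?_
  unfold spinMean
  have := measurable_edgeCorr i
  fun_prop

lemma measurableSet_cyclicCap (ε : Fin (n + 1) → ℤˣ) : MeasurableSet (cyclicCap ε) := by
  have hdis : Measurable (disagreement ε) := by
    have := measurable_edgeCorr (n := n)
    unfold disagreement
    fun_prop
  exact measurableSet_edgeRelaxation.inter (measurableSet_lt hdis measurable_const)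

/-- Two sign patterns of the same product differ in at least two places, and each such place
contributes `2` to the sum of the two disagreements. -/
lemma four_le_disagreement_add {ε η : Fin (n + 1) → ℤˣ} (hne : ε ≠ η)
    (hprod : ∏ i, ε i = ∏ i, η i) {p : CyclePoint n} (hp : p ∈ edgeRelaxation n) :
    4 ≤ disagreement ε p + disagreement η p := by
  obtain ⟨i, hi⟩ := Function.ne_iff.1 hne
  obtain ⟨j, hj, hji⟩ : ∃ j, ε j ≠ η j ∧ j ≠ i := by
    by_contra! hcon
    refine hi (mul_right_cancel (b := ∏ j ∈ Finset.univ.erase i, ε j) ?_)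
    rw [Finset.mul_prod_erase _ _ (Finset.mem_univ i), hprod,
      ← Finset.mul_prod_erase _ _ (Finset.mem_univ i)]
    congr 1
    exact Finset.prod_congr rfl fun j hj => by_contra fun h =>
      (Finset.ne_of_mem_erase hj) (hcon j (Ne.symm h))
  have htwo : ∀ k, ε k ≠ η k →
      1 - (ε k : ℤ) * edgeCorr p k + (1 - (η k : ℤ) * edgeCorr p k) = 2 := by
    intro k hk
    rw [Int.units_ne_iff_eq_neg.1 hk]
    push_cast
    ring
  have hnonneg : ∀ (σ : ℤˣ) k, 0 ≤ 1 - (σ : ℤ) * edgeCorr p k := fun σ k =>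
    (abs_nonneg _).trans ((hp k).abs_sub_mul_le σ)
  rw [disagreement, disagreement, ← Finset.sum_add_distrib]
  calc (4 : ℝ) = 2 + 2 := by norm_num
    _ ≤ _ := by
      simpa only [htwo i hi, htwo j hj] using Finset.add_le_sum
        (fun k _ => add_nonneg (hnonneg (ε k) k) (hnonneg (η k) k))
        (Finset.mem_univ i) (Finset.mem_univ j) hji.symm

lemma pairwise_disjoint_cyclicCap : Pairwise (Function.onFun Disjoint
    fun ε : {ε : Fin (n + 1) → ℤˣ // ∏ i, ε i = -1} => cyclicCap ε.1) := by
  intro ε η hne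
  refine Set.disjoint_left.2 fun p hε hη => ?_
  have := four_le_disagreement_add (Subtype.coe_ne_coe.2 hne) (ε.2.trans η.2.symm) hε.1
  linarith [hε.2, hη.2]

lemma card_prod_eq_neg_one :
    Nat.card {ε : Fin (n + 1) → ℤˣ // ∏ i, ε i = -1} = 2 ^ n := by
  let e : {ε : Fin (n + 1) → ℤˣ // ∏ i, ε i = -1} ≃ (Fin n → ℤˣ) :=
    { toFun := fun ε => Fin.tail ε.1
      invFun := fun δ => ⟨Fin.cons (-∏ i, δ i) δ, by
        simp [Fin.prod_univ_succ, ← sq, Int.units_sq]⟩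
      left_inv := fun ⟨ε, hε⟩ => Subtype.ext <| by
        have hzero : ε 0 = -∏ i, Fin.tail ε i := by
          rw [Fin.prod_univ_succ] at hε
          rw [eq_mul_inv_of_mul_eq hε, Int.units_inv_eq_self, neg_one_mul]
          rfl
        simp only [← hzero, Fin.cons_self_tail]
      right_inv := fun δ => Fin.tail_cons _ _ }
  rw [Nat.card_congr e]
  simp

lemma cyclePolytope_eq_sdiff : cyclePolytope n =
    edgeRelaxation n \ ⋃ ε : {ε : Fin (n + 1) → ℤˣ // ∏ i, ε i = -1}, cyclicCap ε.1 := by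
  ext p
  simp only [cyclePolytope, cyclicCap, Set.mem_sdiff, Set.mem_iUnion, Set.mem_ofPred_eq,
    not_exists, not_and, not_lt, Subtype.forall]
  exact and_congr_right fun hp => forall₂_congr fun ε _ => ⟨fun h _ => h, fun h => h hp⟩

theorem volume_cyclePolytope (n : ℕ) : volume (cyclePolytope n) =
    volume (edgeRelaxation n) - 2 ^ n * (2⁻¹ * ((2 * (n + 1)).factorial : ENNReal)⁻¹) := by
  have hunion : volume (⋃ ε : {ε : Fin (n + 1) → ℤˣ // ∏ i, ε i = -1}, cyclicCap ε.1) =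
      2 ^ n * (2⁻¹ * ((2 * (n + 1)).factorial : ENNReal)⁻¹) := by
    rw [measure_iUnion pairwise_disjoint_cyclicCap fun ε => measurableSet_cyclicCap ε.1,
      tsum_congr fun ε => volume_cyclicCap ε.2, tsum_fintype, Finset.sum_const, Finset.card_univ,
      ← Nat.card_eq_fintype_card, card_prod_eq_neg_one, nsmul_eq_mul, Nat.cast_pow, Nat.cast_ofNat]
  have hsub : (⋃ ε : {ε : Fin (n + 1) → ℤˣ // ∏ i, ε i = -1}, cyclicCap ε.1) ⊆
      edgeRelaxation n := Set.iUnion_subset fun ε => Set.sep_subset _ _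
  have hmeas := MeasurableSet.iUnion fun ε : {ε : Fin (n + 1) → ℤˣ // ∏ i, ε i = -1} =>
    measurableSet_cyclicCap ε.1
  rw [cyclePolytope_eq_sdiff, measure_sdiff hsub hmeas.nullMeasurableSet, hunion]
  rw [hunion]
  exact ENNReal.mul_ne_top (by finiteness) (by simp [ENNReal.mul_eq_top, Nat.factorial_ne_zero])

end Cycle

section SignSequence

/-- A finitely supported random sequence of signs. -/
structure SignSequence where
  /-- The sample space. -/
  Ω : Type
  [fintype : Fintype Ω]
  /-- The probability of a sample point. -/
  weight : Ω → ℝ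
  weight_nonneg : ∀ ω, 0 ≤ weight ω
  sum_weight : ∑ ω, weight ω = 1
  /-- The value of the `j`-th sign at a sample point. -/
  sign : ℕ → Ω → ℤˣ

namespace SignSequence

attribute [instance] SignSequence.fintype

/-- The expectation of the `j`-th sign. -/
def mean (X : SignSequence) (j : ℕ) : ℝ := ∑ ω, X.weight ω * (X.sign j ω : ℤ)

/-- The expectation of the product of two signs. -/
def corr (X : SignSequence) (i j : ℕ) : ℝ :=
  ∑ ω, X.weight ω * ((X.sign i ω : ℤ) * (X.sign j ω : ℤ))

lemma sum_weight_mul (X : SignSequence) (i j : ℕ) (a b c d : ℝ) :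
    ∑ ω, X.weight ω * (a + b * (X.sign i ω : ℤ) + c * (X.sign j ω : ℤ) +
      d * ((X.sign i ω : ℤ) * (X.sign j ω : ℤ))) =
      a + b * X.mean i + c * X.mean j + d * X.corr i j := by
  calc _ = a * ∑ ω, X.weight ω + b * X.mean i + c * X.mean j + d * X.corr i j := by
        simp only [mean, corr, Finset.mul_sum, ← Finset.sum_add_distrib]
        exact Finset.sum_congr rfl fun ω _ => by ring
    _ = _ := by rw [X.sum_weight, mul_one]

/-- The indicator of `X i = α` is `(1 + α * X i) / 2`. -/
lemma sum_weight_filter (X : SignSequence) (i j : ℕ) (α β : ℤˣ) :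
    ∑ ω with (X.sign i ω, X.sign j ω) = (α, β), X.weight ω =
      (1 + (α : ℤ) * X.mean i + (β : ℤ) * X.mean j + (α : ℤ) * (β : ℤ) * X.corr i j) / 4 := by
  have hind : ∀ σ τ : ℤˣ, (if (σ, τ) = (α, β) then (1 : ℝ) else 0) =
      1 / 4 + (α : ℤ) / 4 * (σ : ℤ) + (β : ℤ) / 4 * (τ : ℤ) +
        (α : ℤ) * (β : ℤ) / 4 * ((σ : ℤ) * (τ : ℤ)) := by
    revert α β
    simp only [forall_intUnits, Prod.mk.injEq]
    norm_num
  have hsum := Finset.sum_congr rfl fun ω (_ : ω ∈ Finset.univ) =>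
    congrArg (X.weight ω * ·) (hind (X.sign i ω) (X.sign j ω))
  simp only [mul_ite, mul_one, mul_zero, ← Finset.sum_filter] at hsum
  rw [hsum, X.sum_weight_mul]
  ring

end SignSequence

/-- Conditionally on the value of `f`, a point `c` is drawn with law proportional to `ν (f ω)`. -/
lemma exists_gluing {Ω B C : Type*} [Fintype Ω] [Fintype C] [DecidableEq B] {w : Ω → ℝ}
    {f : Ω → B} {ν : B → C → ℝ} (hw : ∀ ω, 0 ≤ w ω) (hν : ∀ b c, 0 ≤ ν b c)
    (hmarg : ∀ b, ∑ c, ν b c = ∑ ω with f ω = b, w ω) :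
    ∃ W : Ω × C → ℝ, (∀ x, 0 ≤ W x) ∧ (∀ ω, ∑ c, W (ω, c) = w ω) ∧
      ∀ b c, ∑ ω with f ω = b, W (ω, c) = ν b c := by
  have hnull : ∀ b, ∑ c, ν b c = 0 → (∀ c, ν b c = 0) ∧ ∀ ω, f ω = b → w ω = 0 := by
    intro b hb
    refine ⟨fun c => ?_, fun ω hω => ?_⟩
    · exact (Finset.sum_eq_zero_iff_of_nonneg fun c _ => hν b c).1 hb c (Finset.mem_univ c)
    · exact (Finset.sum_eq_zero_iff_of_nonneg fun ω _ => hw ω).1 ((hmarg b).symm.trans hb) ω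
        (by simp [hω])
  refine ⟨fun x => w x.1 * (ν (f x.1) x.2 / ∑ c, ν (f x.1) c), fun x => ?_, fun ω => ?_,
    fun b c => ?_⟩
  · exact mul_nonneg (hw _) (div_nonneg (hν _ _) (Finset.sum_nonneg fun c _ => hν _ c))
  · dsimp only
    rw [← Finset.mul_sum, ← Finset.sum_div]
    rcases eq_or_ne (∑ c, ν (f ω) c) 0 with h | h
    · rw [(hnull _ h).2 ω rfl, zero_mul]
    · rw [div_self h, mul_one]
  · have hfib : ∑ ω with f ω = b, w ω * (ν (f ω) c / ∑ c, ν (f ω) c) =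
        (∑ ω with f ω = b, w ω) * (ν b c / ∑ c, ν b c) := by
      rw [Finset.sum_mul]
      refine Finset.sum_congr rfl fun ω hω => ?_
      rw [(Finset.mem_filter.1 hω).2]
    rw [hfib, ← hmarg]
    rcases eq_or_ne (∑ c, ν b c) 0 with h | h
    · rw [(hnull b h).1 c, h, zero_mul]
    · rw [mul_div_cancel₀ _ h]

/-- The free parameter `q` is the mean of the product of the three signs. -/
lemma exists_triple_law {s₀ s₁ s₂ p c r : ℝ} (h₀₁ : IsPairMoment s₀ s₁ p)
    (h₁₂ : IsPairMoment s₁ s₂ c) (h₀₂ : IsPairMoment s₀ s₂ r) (htri : IsPairMoment p c r) :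
    ∃ q : ℝ, ∀ α β γ : ℤˣ, 0 ≤ (1 + (α : ℤ) * s₀ + (β : ℤ) * s₁ + (γ : ℤ) * s₂ +
      (α : ℤ) * (β : ℤ) * p + (β : ℤ) * (γ : ℤ) * c + (α : ℤ) * (γ : ℤ) * r +
      (α : ℤ) * (β : ℤ) * (γ : ℤ) * q) / 8 := by
  rw [isPairMoment_iff] at h₀₁ h₁₂ h₀₂ htri
  obtain ⟨a₁, a₂, a₃, a₄⟩ := h₀₁
  obtain ⟨b₁, b₂, b₃, b₄⟩ := h₁₂
  obtain ⟨d₁, d₂, d₃, d₄⟩ := h₀₂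
  obtain ⟨e₁, e₂, e₃, e₄⟩ := htri
  obtain ⟨q, ⟨l₁, l₂, l₃, l₄⟩, u₁, u₂, u₃, u₄⟩ : ∃ q,
      (-1 - s₀ - s₁ - s₂ - p - c - r ≤ q ∧ -1 - s₀ + s₁ + s₂ + p - c + r ≤ q ∧
        -1 + s₀ - s₁ + s₂ + p + c - r ≤ q ∧ -1 + s₀ + s₁ - s₂ - p + c + r ≤ q) ∧
      q ≤ 1 - s₀ - s₁ - s₂ + p + c + r ∧ q ≤ 1 - s₀ + s₁ + s₂ - p + c - r ∧
        q ≤ 1 + s₀ - s₁ + s₂ - p - c + r ∧ q ≤ 1 + s₀ + s₁ - s₂ + p - c - r := by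
    simp only [← max_le_iff, ← le_min_iff]
    refine ⟨_, le_rfl, ?_⟩
    simp only [max_le_iff, le_min_iff]
    refine ⟨⟨?_, ?_, ?_, ?_⟩, ⟨?_, ?_, ?_, ?_⟩, ⟨?_, ?_, ?_, ?_⟩, ?_, ?_, ?_, ?_⟩ <;> linarith
  refine ⟨q, ?_⟩
  simp only [forall_intUnits]
  refine ⟨⟨⟨?_, ?_⟩, ?_, ?_⟩, ⟨?_, ?_⟩, ?_, ?_⟩ <;> push_cast <;> linarith

lemma exists_forall_le_one_sub_mul {A : ℤˣ → Set ℝ} (hne : ∀ σ, (A σ).Nonempty)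
    (h : ∀ x ∈ A 1, ∀ y ∈ A (-1), x + y ≤ 2) :
    ∃ p : ℝ, ∀ σ : ℤˣ, ∀ x ∈ A σ, x ≤ 1 - (σ : ℤ) * p := by
  have hle : ∀ y ∈ (· - 1) '' A (-1), ∀ x ∈ (1 - ·) '' A 1, y ≤ x := by
    rintro _ ⟨y, hy, rfl⟩ _ ⟨x, hx, rfl⟩
    linarith [h x hx y hy]
  obtain ⟨p, hlower, hupper⟩ :=
    exists_between_of_forall_le ((hne (-1)).image _) ((hne 1).image _) hle
  refine ⟨p, forall_intUnits.2 ⟨fun x hx => ?_, fun y hy => ?_⟩⟩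
  · have := hupper ⟨x, hx, rfl⟩
    push_cast
    linarith
  · have := hlower ⟨y, hy, rfl⟩
    push_cast
    linarith

lemma abs_sub_mul_add_abs_sub_neg_mul_le {a b : ℝ} (ha : |a| ≤ 1) (hb : |b| ≤ 1) (σ : ℤˣ) :
    |a - (σ : ℤ) * b| + |a - ((-σ : ℤˣ) : ℤ) * b| ≤ 2 := by
  rw [abs_le] at ha hb
  rcases Int.units_eq_one_or σ with rfl | rfl <;> push_cast <;>
    rcases abs_cases (a - b) with h | h <;> rcases abs_cases (a + b) with h' | h' <;>
    norm_num <;> linarith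

lemma IsPairMoment.abs_sub_mul_add_le {a b b' c r : ℝ} (hc : IsPairMoment b b' c)
    (hr : IsPairMoment a b' r) (σ : ℤˣ) :
    |a - (σ : ℤ) * b| + |c - ((-σ : ℤˣ) : ℤ) * r| ≤ 2 := by
  obtain ⟨h₁, h₂, h₃, h₄⟩ := isPairMoment_iff.1 hc
  obtain ⟨k₁, k₂, k₃, k₄⟩ := isPairMoment_iff.1 hr
  rcases Int.units_eq_one_or σ with rfl | rfl <;> push_cast <;>
    rcases abs_cases (a - b) with h | h <;> rcases abs_cases (a + b) with h' | h' <;>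
    rcases abs_cases (c - r) with k | k <;> rcases abs_cases (c + r) with k' | k' <;>
    norm_num <;> linarith

lemma two_le_sum_add_sum {ι : Type*} {t : Finset ι} {c : ι → ℝ} (hc : ∀ j ∈ t, |c j| ≤ 1)
    {ε δ : ι → ℤˣ} (h : ∏ j ∈ t, ε j ≠ ∏ j ∈ t, δ j) :
    2 ≤ ∑ j ∈ t, (1 - (ε j : ℤ) * c j) + ∑ j ∈ t, (1 - (δ j : ℤ) * c j) := by
  obtain ⟨i, hi, hne⟩ : ∃ i ∈ t, ε i ≠ δ i := by
    contrapose! h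
    exact Finset.prod_congr rfl h
  have hnonneg : ∀ j ∈ t, 0 ≤ (1 - (ε j : ℤ) * c j) + (1 - (δ j : ℤ) * c j) := by
    intro j hj
    obtain ⟨h₁, h₂⟩ := abs_le.1 (hc j hj)
    rcases Int.units_eq_one_or (ε j) with h | h <;>
      rcases Int.units_eq_one_or (δ j) with h' | h' <;> rw [h, h'] <;> push_cast <;> linarith
  calc (2 : ℝ) = (1 - (ε i : ℤ) * c i) + (1 - (δ i : ℤ) * c i) := by
        rw [Int.units_ne_iff_eq_neg.1 hne]
        push_cast
        ring
    _ ≤ ∑ j ∈ t, ((1 - (ε j : ℤ) * c j) + (1 - (δ j : ℤ) * c j)) :=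
        Finset.single_le_sum hnonneg hi
    _ = _ := Finset.sum_add_distrib

/-- The inequalities satisfied by the means `s j` of random signs `S 0, …, S k`, the correlations
`c j` of `S j` and `S (j + 1)`, and the correlation `r` of `S k` and `S 0`. -/
structure IsCycleMoment (s c : ℕ → ℝ) (k : ℕ) (r : ℝ) : Prop where
  path : ∀ j < k, IsPairMoment (s j) (s (j + 1)) (c j)
  closing : IsPairMoment (s 0) (s k) r
  cycle : ∀ ε : ℕ → ℤˣ, 1 - ((∏ j ∈ Finset.range k, ε j : ℤˣ) : ℤ) * r ≤
    ∑ j ∈ Finset.range k, (1 - (ε j : ℤ) * c j)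

variable {s c : ℕ → ℝ} {k : ℕ} {r : ℝ}

/-- The numbers `x` for which `x ≤ 1 - σ * p` is needed of a chord of correlation `p` that cuts the
cycle `0, …, k + 1` into the cycle `0, …, k` and the triangle `0, k, k + 1`. -/
def chordBounds (s c : ℕ → ℝ) (k : ℕ) (r : ℝ) (σ : ℤˣ) : Set ℝ :=
  {x | x = |s 0 - (σ : ℤ) * s k| ∨ x = |c k - (σ : ℤ) * r| ∨
    ∃ ε : ℕ → ℤˣ, ∏ j ∈ Finset.range k, ε j = -σ ∧
      x = 2 - ∑ j ∈ Finset.range k, (1 - (ε j : ℤ) * c j)}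

lemma IsCycleMoment.abs_sub_mul_le (h : IsCycleMoment s c (k + 1) r) {σ : ℤˣ} {ε : ℕ → ℤˣ}
    (hε : ∏ j ∈ Finset.range k, ε j = σ) :
    |c k - (σ : ℤ) * r| ≤ ∑ j ∈ Finset.range k, (1 - (ε j : ℤ) * c j) := by
  have hext : ∀ τ : ℤˣ, (τ : ℤ) * (c k - (σ : ℤ) * r) ≤
      ∑ j ∈ Finset.range k, (1 - (ε j : ℤ) * c j) := by
    intro τ
    have hlt : ∀ j ∈ Finset.range k, Function.update ε k τ j = ε j := fun j hj =>
      Function.update_of_ne (Finset.mem_range.1 hj).ne _ _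
    have := h.cycle (Function.update ε k τ)
    rw [Finset.prod_range_succ, Finset.sum_range_succ, Finset.prod_congr rfl hlt, hε,
      Finset.sum_congr rfl fun j hj => by rw [hlt j hj], Function.update_self] at this
    push_cast at this
    linarith
  obtain ⟨h₁, h₂⟩ := forall_intUnits.1 hext
  push_cast at h₁ h₂
  exact abs_le.2 ⟨by linarith, by linarith⟩

lemma IsCycleMoment.add_le_two (h : IsCycleMoment s c (k + 1) r) {σ : ℤˣ} {x y : ℝ}
    (hx : x ∈ chordBounds s c k r σ) (hy : y ∈ chordBounds s c k r (-σ)) : x + y ≤ 2 := by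
  have hlast : IsPairMoment (s k) (s (k + 1)) (c k) := h.path k k.lt_succ_self
  have htelescope : ∀ {τ : ℤˣ} {ε : ℕ → ℤˣ}, ∏ j ∈ Finset.range k, ε j = τ →
      |s 0 - (τ : ℤ) * s k| ≤ ∑ j ∈ Finset.range k, (1 - (ε j : ℤ) * c j) := fun hε =>
    hε ▸ abs_sub_prod_mul_le k fun j hj => (h.path j (hj.trans k.lt_succ_self)).abs_sub_mul_le _
  rcases hx with rfl | rfl | ⟨ε, hε, rfl⟩ <;> rcases hy with rfl | rfl | ⟨δ, hδ, rfl⟩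
  · exact abs_sub_mul_add_abs_sub_neg_mul_le h.closing.abs_le_one hlast.abs_le_one σ
  · exact hlast.abs_sub_mul_add_le h.closing σ
  · linarith [htelescope (hδ.trans (neg_neg σ))]
  · simpa only [neg_neg, add_comm] using hlast.abs_sub_mul_add_le h.closing (-σ)
  · exact abs_sub_mul_add_abs_sub_neg_mul_le hlast.rotate.rotate.abs_le_one
      h.closing.rotate.rotate.abs_le_one σ
  · linarith [h.abs_sub_mul_le (hδ.trans (neg_neg σ))]
  · linarith [htelescope hε]
  · linarith [h.abs_sub_mul_le hε]
  · have hne : ∏ j ∈ Finset.range k, ε j ≠ ∏ j ∈ Finset.range k, δ j := by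
      rw [hε, hδ, neg_neg]
      exact neg_units_ne_self σ
    linarith [two_le_sum_add_sum (c := c) (fun j hj => (h.path j
      ((Finset.mem_range.1 hj).trans k.lt_succ_self)).rotate.rotate.abs_le_one) hne]

lemma IsCycleMoment.exists_chord (h : IsCycleMoment s c (k + 1) r) :
    ∃ p, IsCycleMoment s c k p ∧ IsPairMoment p (c k) r := by
  obtain ⟨p, hp⟩ := exists_forall_le_one_sub_mul (A := chordBounds s c k r)
    (fun _ => ⟨_, Or.inl rfl⟩) fun _ hx _ hy => h.add_le_two hx hy
  refine ⟨p, ⟨fun j hj => h.path j (hj.trans k.lt_succ_self), ?_, fun ε => ?_⟩, ?_⟩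
  · exact isPairMoment_iff_abs.2 fun σ => hp σ _ (Or.inl rfl)
  · have := hp (-∏ j ∈ Finset.range k, ε j) _ (Or.inr (Or.inr ⟨ε, (neg_neg _).symm, rfl⟩))
    push_cast at this ⊢
    linarith
  · have : IsPairMoment (c k) r p :=
      isPairMoment_iff_abs.2 fun σ => hp σ _ (Or.inr (Or.inl rfl))
    exact this.rotate.rotate

namespace SignSequence

/-- `ν` is the joint law of the `0`-th, the `k`-th and the new `(k + 1)`-st sign. -/
lemma exists_extension (X : SignSequence) (k : ℕ) {ν : ℤˣ × ℤˣ → ℤˣ → ℝ} (hν : ∀ b γ, 0 ≤ ν b γ)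
    (hmarg : ∀ b, ∑ γ, ν b γ = ∑ ω with (X.sign 0 ω, X.sign k ω) = b, X.weight ω) :
    ∃ Y : SignSequence, (∀ j ≤ k, Y.mean j = X.mean j) ∧
      (∀ i ≤ k, ∀ j ≤ k, Y.corr i j = X.corr i j) ∧
      Y.mean (k + 1) = ∑ γ : ℤˣ, ∑ b, ν b γ * (γ : ℤ) ∧
      Y.corr k (k + 1) = ∑ γ : ℤˣ, ∑ b, ν b γ * ((b.2 : ℤ) * (γ : ℤ)) ∧
      Y.corr 0 (k + 1) = ∑ γ : ℤˣ, ∑ b, ν b γ * ((b.1 : ℤ) * (γ : ℤ)) := by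
  obtain ⟨W, hW, hfst, hfib⟩ := exists_gluing X.weight_nonneg hν hmarg
  have hold : ∀ g : X.Ω → ℝ, ∑ x, W x * g x.1 = ∑ ω, X.weight ω * g ω := by
    intro g
    simp only [Fintype.sum_prod_type, ← Finset.sum_mul, hfst]
  have hnew : ∀ g : ℤˣ × ℤˣ → ℤˣ → ℝ, ∑ x, W x * g (X.sign 0 x.1, X.sign k x.1) x.2 =
      ∑ γ, ∑ b, ν b γ * g b γ := by
    intro g
    rw [Fintype.sum_prod_type_right]
    refine Finset.sum_congr rfl fun γ _ => ?_
    rw [← Finset.sum_fiberwise (g := fun ω => (X.sign 0 ω, X.sign k ω))]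
    refine Finset.sum_congr rfl fun b _ => ?_
    rw [← hfib, Finset.sum_mul]
    exact Finset.sum_congr rfl fun ω hω => by rw [(Finset.mem_filter.1 hω).2]
  have hsum : ∑ x, W x = 1 := by simpa [X.sum_weight] using hold 1
  let Y : SignSequence := ⟨X.Ω × ℤˣ, W, hW, hsum, fun j x => if j ≤ k then X.sign j x.1 else x.2⟩
  have hsign : ∀ j ≤ k, ∀ x : X.Ω × ℤˣ, Y.sign j x = X.sign j x.1 := fun j hj x => if_pos hj
  have hlast : ∀ x : X.Ω × ℤˣ, Y.sign (k + 1) x = x.2 := fun x => if_neg k.lt_succ_self.not_ge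
  refine ⟨Y, fun j hj => ?_, fun i hi j hj => ?_, ?_, ?_, ?_⟩
  · exact (Finset.sum_congr rfl fun x _ => by rw [hsign j hj]).trans (hold _)
  · exact (Finset.sum_congr rfl fun x _ => by rw [hsign i hi, hsign j hj]).trans (hold _)
  · exact (Finset.sum_congr rfl fun x _ => by rw [hlast]).trans (hnew fun _ γ => (γ : ℤ))
  · exact (Finset.sum_congr rfl fun x _ => by rw [hsign k le_rfl, hlast]).trans
      (hnew fun b γ => (b.2 : ℤ) * (γ : ℤ))
  · exact (Finset.sum_congr rfl fun x _ => by rw [hsign 0 k.zero_le, hlast]).trans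
      (hnew fun b γ => (b.1 : ℤ) * (γ : ℤ))

/-- `X` has the means and the correlations that `IsCycleMoment` constrains. -/
structure Realizes (X : SignSequence) (s c : ℕ → ℝ) (k : ℕ) (r : ℝ) : Prop where
  mean_eq : ∀ j ≤ k, X.mean j = s j
  corr_succ : ∀ j < k, X.corr j (j + 1) = c j
  corr_closing : X.corr 0 k = r

lemma Realizes.exists_extension {X : SignSequence} {p : ℝ} (hX : X.Realizes s c k p)
    (h₀₁ : IsPairMoment (s 0) (s k) p) (h₁₂ : IsPairMoment (s k) (s (k + 1)) (c k))
    (h₀₂ : IsPairMoment (s 0) (s (k + 1)) r) (htri : IsPairMoment p (c k) r) :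
    ∃ Y : SignSequence, Y.Realizes s c (k + 1) r := by
  obtain ⟨q, hq⟩ := exists_triple_law h₀₁ h₁₂ h₀₂ htri
  have hmarg := fun b : ℤˣ × ℤˣ => X.sum_weight_filter 0 k b.1 b.2
  rw [hX.mean_eq 0 k.zero_le, hX.mean_eq k le_rfl, hX.corr_closing] at hmarg
  obtain ⟨Y, hmean, hcorr, hmean', hcorr', hclosing⟩ :=
    X.exists_extension k (fun b γ => hq b.1 b.2 γ) fun b => by
      rw [hmarg, sum_intUnits]
      push_cast
      ring
  refine ⟨Y, fun j hj => ?_, fun j hj => ?_, ?_⟩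
  · rcases hj.lt_or_eq with hj | rfl
    · rw [hmean j (Nat.le_of_lt_succ hj), hX.mean_eq j (Nat.le_of_lt_succ hj)]
    · rw [hmean']
      simp only [Fintype.sum_prod_type, sum_intUnits]
      push_cast
      ring
  · rcases (Nat.le_of_lt_succ hj).lt_or_eq with hj | rfl
    · rw [hcorr j hj.le (j + 1) hj, hX.corr_succ j hj]
    · rw [hcorr']
      simp only [Fintype.sum_prod_type, sum_intUnits]
      push_cast
      ring
  · rw [hclosing]
    simp only [Fintype.sum_prod_type, sum_intUnits]
    push_cast
    ring

lemma exists_realizes_zero (hr : IsCycleMoment s c 0 r) :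
    ∃ X : SignSequence, X.Realizes s c 0 r := by
  obtain ⟨h₁, h₂, -, h₄⟩ := isPairMoment_iff.1 hr.closing
  have hcycle : 1 - r ≤ 0 := by simpa using hr.cycle 1
  let X : SignSequence :=
    { Ω := ℤˣ
      weight := fun σ => (1 + (σ : ℤ) * s 0) / 2
      weight_nonneg := forall_intUnits.2 ⟨by push_cast; linarith, by push_cast; linarith⟩
      sum_weight := by rw [sum_intUnits]; push_cast; ring
      sign := fun _ σ => σ }
  have hmean : X.mean 0 = s 0 := by
    refine (sum_intUnits _).trans ?_
    simp only [X]
    push_cast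
    ring
  have hcorr : X.corr 0 0 = r := by
    refine (sum_intUnits _).trans ?_
    simp only [X]
    push_cast
    linarith
  refine ⟨X, fun j hj => ?_, fun j hj => absurd hj j.not_lt_zero, hcorr⟩
  rw [Nat.le_zero.1 hj, hmean]

end SignSequence

theorem IsCycleMoment.exists_realizes (h : IsCycleMoment s c k r) :
    ∃ X : SignSequence, X.Realizes s c k r := by
  induction k generalizing r with
  | zero => exact SignSequence.exists_realizes_zero h
  | succ k ih =>
    obtain ⟨p, hp, htri⟩ := h.exists_chord
    obtain ⟨X, hX⟩ := ih hp
    exact hX.exists_extension hp.closing (h.path k k.lt_succ_self) h.closing htri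

end SignSequence

section CycleVertices

open Fin.NatCast

variable {n : ℕ}

/-- The points `(x, y)` with `x i ∈ {0, 1}` and `y i = x i * x (i + 1)`. -/
def cycleVertices (n : ℕ) : Set (CyclePoint n) :=
  {p | (∀ i, p.1 i = 0 ∨ p.1 i = 1) ∧ ∀ i, p.2 i = p.1 i * p.1 (i + 1)}

/-- The vertex `x i = (1 - S i) / 2` that corresponds to a choice of signs. -/
def signVertex (S : Fin (n + 1) → ℤˣ) : CyclePoint n :=
  (fun i => (1 - (S i : ℤ)) / 2, fun i => (1 - (S i : ℤ)) / 2 * ((1 - (S (i + 1) : ℤ)) / 2))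

lemma range_signVertex : Set.range (signVertex (n := n)) = cycleVertices n := by
  refine Set.Subset.antisymm ?_ fun p hp => ?_
  · rintro _ ⟨S, rfl⟩
    refine ⟨fun i => ?_, fun i => rfl⟩
    rcases Int.units_eq_one_or (S i) with h | h <;> simp [signVertex, h]
  · have hfst : ∀ i, (1 - (((if p.1 i = 0 then 1 else -1 : ℤˣ) : ℤ) : ℝ)) / 2 = p.1 i := by
      intro i
      rcases hp.1 i with h | h <;> norm_num [h]
    refine ⟨fun i => if p.1 i = 0 then 1 else -1, Prod.ext (funext hfst) (funext fun i => ?_)⟩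
    simp only [signVertex, hfst, hp.2 i]

lemma spinMean_signVertex (S : Fin (n + 1) → ℤˣ) (i : Fin (n + 1)) :
    spinMean (signVertex S) i = (S i : ℤ) := by
  simp only [spinMean, signVertex]
  ring

lemma edgeCorr_signVertex (S : Fin (n + 1) → ℤˣ) (i : Fin (n + 1)) :
    edgeCorr (signVertex S) i = ((S i * S (i + 1) : ℤˣ) : ℤ) := by
  simp only [edgeCorr, signVertex]
  push_cast
  ring

lemma isPairMoment_intUnits (α β : ℤˣ) :
    IsPairMoment ((α : ℤ) : ℝ) ((β : ℤ) : ℝ) (((α * β : ℤˣ) : ℤ) : ℝ) := by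
  rw [isPairMoment_iff]
  rcases Int.units_eq_one_or α with rfl | rfl <;> rcases Int.units_eq_one_or β with rfl | rfl <;>
    norm_num

lemma one_sub_intUnits_mul_nonneg (σ τ : ℤˣ) : 0 ≤ 1 - ((σ : ℤ) : ℝ) * (τ : ℤ) := by
  rcases Int.units_eq_one_or σ with rfl | rfl <;> rcases Int.units_eq_one_or τ with rfl | rfl <;>
    norm_num

lemma signVertex_mem_cyclePolytope (S : Fin (n + 1) → ℤˣ) : signVertex S ∈ cyclePolytope n := by
  refine ⟨fun i => ?_, fun ε hε => ?_⟩
  · rw [spinMean_signVertex, spinMean_signVertex, edgeCorr_signVertex]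
    exact isPairMoment_intUnits _ _
  · obtain ⟨i, hi⟩ : ∃ i, ε i ≠ S i * S (i + 1) := by
      by_contra! h
      have hshift : ∏ i, S (i + 1) = ∏ i, S i := Equiv.prod_comp (Equiv.addRight 1) S
      rw [Finset.prod_congr rfl fun i _ => h i, Finset.prod_mul_distrib, hshift,
        Int.units_mul_self] at hε
      exact absurd hε (by decide)
    have hnonneg : ∀ j ∈ Finset.univ, 0 ≤ 1 - ((ε j : ℤ) : ℝ) * edgeCorr (signVertex S) j := by
      intro j _
      rw [edgeCorr_signVertex]
      exact one_sub_intUnits_mul_nonneg _ _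
    refine le_trans ?_ (Finset.single_le_sum hnonneg (Finset.mem_univ i))
    rw [edgeCorr_signVertex, Int.units_ne_iff_eq_neg.1 hi]
    rcases Int.units_eq_one_or (S i * S (i + 1)) with h | h <;> rw [h] <;> norm_num

lemma convex_cyclePolytope (n : ℕ) : Convex ℝ (cyclePolytope n) := by
  intro p hp q hq a b ha hb hab
  have hmean : ∀ i, spinMean (a • p + b • q) i = a * spinMean p i + b * spinMean q i := by
    intro i
    simp only [spinMean, Prod.fst_add, Prod.smul_fst, Pi.add_apply, Pi.smul_apply, smul_eq_mul]
    linear_combination -hab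
  have hcorr : ∀ i, edgeCorr (a • p + b • q) i = a * edgeCorr p i + b * edgeCorr q i := by
    intro i
    simp only [edgeCorr, Prod.fst_add, Prod.smul_fst, Prod.snd_add, Prod.smul_snd, Pi.add_apply,
      Pi.smul_apply, smul_eq_mul]
    linear_combination -hab
  refine ⟨fun i σ τ => ?_, fun ε hε => ?_⟩
  · have hcombo := add_nonneg (mul_nonneg ha (hp.1 i σ τ)) (mul_nonneg hb (hq.1 i σ τ))
    rw [hmean, hmean, hcorr]
    linear_combination hcombo + hab
  · have hcombo := add_le_add (mul_le_mul_of_nonneg_left (hp.2 ε hε) ha)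
      (mul_le_mul_of_nonneg_left (hq.2 ε hε) hb)
    have hdis : disagreement ε (a • p + b • q) = a * disagreement ε p + b * disagreement ε q := by
      simp only [disagreement, hcorr, Finset.mul_sum, ← Finset.sum_add_distrib]
      exact Finset.sum_congr rfl fun i _ => by linear_combination -hab
    rw [hdis]
    linear_combination hcombo - 2 * hab

lemma isCycleMoment_of_mem_cyclePolytope {p : CyclePoint n} (hp : p ∈ cyclePolytope n) :
    IsCycleMoment (fun j => spinMean p (j : ℕ)) (fun j => edgeCorr p (j : ℕ)) n
      (edgeCorr p (Fin.last n)) := by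
  refine ⟨fun j _ => ?_, ?_, fun ε => ?_⟩
  · simpa using hp.1 (j : ℕ)
  · simpa using (hp.1 (Fin.last n)).symm
  · let δ : Fin (n + 1) → ℤˣ := Fin.snoc (fun j : Fin n => ε j) (-∏ j : Fin n, ε j)
    have hδ : ∏ i, δ i = -1 := by simp [δ, Fin.prod_univ_castSucc]
    have := hp.2 δ hδ
    simp only [disagreement, δ, Fin.sum_univ_castSucc, Fin.snoc_castSucc, Fin.snoc_last] at this
    rw [Finset.prod_range, Finset.sum_range]
    simp only [Fin.coe_eq_castSucc]
    push_cast at this ⊢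
    linarith

lemma mem_convexHull_of_mem_cyclePolytope {p : CyclePoint n} (hp : p ∈ cyclePolytope n) :
    p ∈ convexHull ℝ (cycleVertices n) := by
  obtain ⟨X, hX⟩ := (isCycleMoment_of_mem_cyclePolytope hp).exists_realizes
  have hmean : ∀ i : Fin (n + 1), X.mean i = spinMean p i := by
    intro i
    rw [hX.mean_eq i i.is_le, Fin.cast_val_eq_self]
  have hcorr : ∀ i : Fin (n + 1), X.corr i (i + 1 : Fin (n + 1)) = edgeCorr p i := by
    refine Fin.lastCases ?_ fun j => ?_
    · simpa [SignSequence.corr, mul_comm] using hX.corr_closing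
    · simpa using hX.corr_succ j j.is_lt
  have hsum : p = ∑ ω, X.weight ω • signVertex fun i : Fin (n + 1) => X.sign i ω := by
    refine Prod.ext (funext fun i => ?_) (funext fun i => ?_)
    · have := X.sum_weight_mul i i (1 / 2) (-1 / 2) 0 0
      rw [hmean, spinMean] at this
      rw [Prod.fst_sum, Finset.sum_apply]
      calc p.1 i = _ := by linear_combination -this
        _ = _ := Finset.sum_congr rfl fun ω _ => by
          simp only [signVertex, Prod.smul_fst, Pi.smul_apply, smul_eq_mul]
          ring
    · have := X.sum_weight_mul i (i + 1 : Fin (n + 1)) (1 / 4) (-1 / 4) (-1 / 4) (1 / 4)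
      rw [hmean, hmean, hcorr, spinMean, spinMean, edgeCorr] at this
      rw [Prod.snd_sum, Finset.sum_apply]
      calc p.2 i = _ := by linear_combination -this
        _ = _ := Finset.sum_congr rfl fun ω _ => by
          simp only [signVertex, Prod.smul_snd, Pi.smul_apply, smul_eq_mul]
          ring
  rw [hsum]
  refine (convex_convexHull ℝ _).sum_mem (fun ω _ => X.weight_nonneg ω) X.sum_weight fun ω _ => ?_
  exact subset_convexHull ℝ _ (range_signVertex ▸ Set.mem_range_self _)

theorem convexHull_cycleVertices (n : ℕ) : convexHull ℝ (cycleVertices n) = cyclePolytope n := by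
  refine Set.Subset.antisymm (convexHull_min ?_ (convex_cyclePolytope n))
    fun p hp => mem_convexHull_of_mem_cyclePolytope hp
  rw [← range_signVertex, Set.range_subset_iff]
  exact signVertex_mem_cyclePolytope

end CycleVertices

section CycleGraph

variable {n : ℕ}

lemma cycleG_adj_iff (hn : 2 ≤ n) {i j : Fin (n + 1)} :
    (cycleG (n + 1)).Adj i j ↔ j = i + 1 ∨ i = j + 1 := by
  have hsucc : ∀ i j : Fin (n + 1), ((i : ℕ) + 1) % (n + 1) = j ↔ j = i + 1 := by
    intro i j
    rw [Fin.ext_iff, Fin.val_add, Fin.val_one', Nat.add_mod_mod, eq_comm]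
  have hne : ∀ i : Fin (n + 1), i ≠ i + 1 := by
    have : NeZero n := ⟨by omega⟩
    simp
  rw [cycleG, SimpleGraph.fromRel_adj, hsucc, hsucc]
  refine and_iff_right_of_imp ?_
  rintro (rfl | rfl)
  exacts [hne i, (hne j).symm]

/-- The edge of the cycle from `i` to `i + 1`. -/
def cycleEdge (hn : 2 ≤ n) (i : Fin (n + 1)) : (cycleG (n + 1)).edgeSet :=
  ⟨s(i, i + 1), (cycleG_adj_iff hn).2 (Or.inl rfl)⟩

lemma bijective_cycleEdge (hn : 2 ≤ n) : Function.Bijective (cycleEdge hn) := by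
  refine ⟨fun i j h => ?_, ?_⟩
  · rcases Sym2.eq_iff.1 (Subtype.ext_iff.1 h) with ⟨h, -⟩ | ⟨rfl, h⟩
    · exact h
    · rw [add_assoc, add_eq_left, Fin.ext_iff, Fin.val_add, Fin.val_one', Fin.val_zero,
        ← Nat.add_mod, Nat.mod_eq_of_lt (by omega)] at h
      exact absurd h two_ne_zero
  · rintro ⟨e, he⟩
    induction e with | h i j
    rcases (cycleG_adj_iff hn (i := i) (j := j)).1 he with rfl | rfl
    · exact ⟨i, rfl⟩
    · exact ⟨j, Subtype.ext Sym2.eq_swap⟩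

/-- The edges of the cycle, indexed by their tails. -/
def cycleEdgeEquiv (hn : 2 ≤ n) : Fin (n + 1) ≃ (cycleG (n + 1)).edgeSet :=
  Equiv.ofBijective _ (bijective_cycleEdge hn)

/-- The coordinates of `BQPSet (cycleG (n + 1))`, reindexed as a `CyclePoint`. -/
def cyclePointEquiv (hn : 2 ≤ n) :
    ((Fin (n + 1) → ℝ) × ((cycleG (n + 1)).edgeSet → ℝ)) ≃ₗ[ℝ] CyclePoint n :=
  (LinearEquiv.refl ℝ _).prodCongr (LinearEquiv.funCongrLeft ℝ ℝ (cycleEdgeEquiv hn))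

lemma measurePreserving_cyclePointEquiv (hn : 2 ≤ n) :
    MeasurePreserving (cyclePointEquiv hn) volume volume :=
  (MeasurePreserving.id volume).prod (measurePreserving_comp_equiv (cycleEdgeEquiv hn))

lemma mem_cycleVertices_cyclePointEquiv_iff (hn : 2 ≤ n)
    (p : (Fin (n + 1) → ℝ) × ((cycleG (n + 1)).edgeSet → ℝ)) :
    cyclePointEquiv hn p ∈ cycleVertices n ↔ (∀ i, p.1 i = 0 ∨ p.1 i = 1) ∧
      ∀ i j (h : (cycleG (n + 1)).Adj i j),
        p.2 ⟨s(i, j), (SimpleGraph.mem_edgeSet _).mpr h⟩ = p.1 i * p.1 j := by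
  refine and_congr_right fun _ => ⟨fun h i j hij => ?_, fun h i => h i _ (cycleEdge hn i).2⟩
  rcases (cycleG_adj_iff hn).1 hij with rfl | rfl
  · exact h i
  · rw [mul_comm]
    exact (congrArg p.2 (Subtype.ext Sym2.eq_swap)).trans (h j)

lemma BQPSet_cycleG_eq_preimage (hn : 2 ≤ n) :
    BQPSet (cycleG (n + 1)) = cyclePointEquiv hn ⁻¹' cyclePolytope n := by
  rw [← convexHull_cycleVertices, ← (cyclePointEquiv hn).image_symm_eq_preimage]
  refine Eq.trans (congrArg _ ?_)
    ((cyclePointEquiv hn).symm.toLinearMap.image_convexHull _).symm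
  refine Eq.trans ?_ ((cyclePointEquiv hn).image_symm_eq_preimage _).symm
  exact Set.ext fun p => (mem_cycleVertices_cyclePointEquiv_iff hn p).symm

theorem volume_BQPSet_cycleG_succ (hn : 2 ≤ n) :
    volume (BQPSet (cycleG (n + 1))) = volume (cyclePolytope n) := by
  rw [BQPSet_cycleG_eq_preimage hn]
  exact (measurePreserving_cyclePointEquiv hn).measure_preimage_emb
    (cyclePointEquiv hn).toContinuousLinearEquiv.toHomeomorph.measurableEmbedding _

end CycleGraph

section Tent

lemma volume_setOf_mem_and_forall_mem_Icc {α ι : Type*} [MeasureSpace α] [Fintype ι]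
    {A : Set α} (hA : MeasurableSet A)
    {f g : ι → α → ℝ} (hf : ∀ i, Measurable (f i)) (hg : ∀ i, Measurable (g i)) :
    volume {p : α × (ι → ℝ) | p.1 ∈ A ∧ ∀ i, p.2 i ∈ Set.Icc (f i p.1) (g i p.1)} =
      ∫⁻ x in A, ∏ i, ENNReal.ofReal (g i x - f i x) := by
  have hmeas : MeasurableSet
      {p : α × (ι → ℝ) | p.1 ∈ A ∧ ∀ i, p.2 i ∈ Set.Icc (f i p.1) (g i p.1)} := by
    refine (measurable_fst hA).inter (measurableSet_setOfPred.2 (Measurable.forall fun i => ?_))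
    have hle : MeasurableSet {p : α × (ι → ℝ) | f i p.1 ≤ p.2 i} :=
      measurableSet_le (by fun_prop) (by fun_prop)
    have hge : MeasurableSet {p : α × (ι → ℝ) | p.2 i ≤ g i p.1} :=
      measurableSet_le (by fun_prop) (by fun_prop)
    exact measurableSet_setOfPred.1 (hle.inter hge)
  rw [Measure.volume_eq_prod, Measure.prod_apply hmeas, ← lintegral_indicator hA]
  refine lintegral_congr fun x => ?_
  by_cases hx : x ∈ A
  · have hslice : Prod.mk x ⁻¹' {p : α × (ι → ℝ) | p.1 ∈ A ∧ ∀ i, p.2 i ∈ Set.Icc (f i p.1)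
        (g i p.1)} = Set.univ.pi fun i => Set.Icc (f i x) (g i x) := by
      ext y
      simp only [Set.mem_preimage, Set.mem_ofPred_eq, hx, true_and, Set.mem_univ_pi]
    rw [hslice, volume_pi_pi, Set.indicator_of_mem hx]
    simp only [Real.volume_Icc]
  · rw [Set.indicator_of_notMem hx]
    simp [hx]

/-- The tent map. -/
def tent (x : ℝ) : ℝ := 2 * min x (1 - x)

@[fun_prop]
lemma measurable_tent : Measurable tent := by
  unfold tent
  fun_prop

lemma measurePreserving_tent : MeasurePreserving tent (volume.restrict (Set.Icc 0 1))
    (volume.restrict (Set.Icc 0 1)) := by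
  refine ⟨measurable_tent, Measure.ext_of_Ici _ _ fun a => ?_⟩
  have htent : tent ⁻¹' Set.Ici a = Set.Icc (a / 2) (1 - a / 2) := by
    ext x
    simp only [tent, Set.mem_preimage, Set.mem_Ici, Set.mem_Icc]
    grind
  have hIci : Set.Ici a ∩ Set.Icc 0 1 = Set.Icc (max a 0) 1 := by
    ext
    simp
    tauto
  rw [Measure.map_apply measurable_tent measurableSet_Ici,
    Measure.restrict_apply (measurable_tent measurableSet_Ici),
    Measure.restrict_apply measurableSet_Ici, htent, hIci, Set.Icc_inter_Icc, Real.volume_Icc,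
    Real.volume_Icc]
  congr 1
  grind

lemma min_sub_max_eq_half_min_tent (x y : ℝ) :
    min x y - max 0 (x + y - 1) = 2⁻¹ * min (tent x) (tent y) := by
  unfold tent
  grind

end Tent

section Relaxation

variable {n : ℕ}

/-- The polytope `0 ≤ y i ≤ x i`, `y i ≤ x (i + 1)`, `x i ≤ 1`: the order polytope of the cyclic
zigzag poset. -/
def cyclicZigzag (n : ℕ) : Set (CyclePoint n) :=
  {p | p.1 ∈ Set.Icc 0 1 ∧ ∀ i, p.2 i ∈ Set.Icc 0 (min (p.1 i) (p.1 (i + 1)))}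

lemma volume_cyclicZigzag_eq_lintegral (n : ℕ) : volume (cyclicZigzag n) =
    ∫⁻ x in Set.Icc (0 : Fin (n + 1) → ℝ) 1, ∏ i, ENNReal.ofReal (min (x i) (x (i + 1))) := by
  refine (volume_setOf_mem_and_forall_mem_Icc measurableSet_Icc
    (f := fun (_ : Fin (n + 1)) (_ : Fin (n + 1) → ℝ) => 0)
    (g := fun i (x : Fin (n + 1) → ℝ) => min (x i) (x (i + 1))) (by fun_prop)
    (by fun_prop)).trans ?_
  simp only [sub_zero]

lemma edgeRelaxation_eq_setOf : edgeRelaxation n = {p | p.1 ∈ Set.Icc 0 1 ∧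
    ∀ i, p.2 i ∈ Set.Icc (max 0 (p.1 i + p.1 (i + 1) - 1)) (min (p.1 i) (p.1 (i + 1)))} := by
  ext p
  refine mem_edgeRelaxation_iff.trans (and_iff_right_of_imp fun h => ?_).symm
  have hle := fun i => (h i).1.trans (h i).2
  simp only [max_le_iff, le_min_iff] at hle
  exact ⟨fun i => (hle i).1.1, fun i => by rw [Pi.one_apply]; linarith [(hle i).2.2]⟩

lemma volume_edgeRelaxation_eq_lintegral (n : ℕ) : volume (edgeRelaxation n) =
    ∫⁻ x in Set.Icc (0 : Fin (n + 1) → ℝ) 1, ∏ i,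
      ENNReal.ofReal (min (x i) (x (i + 1)) - max 0 (x i + x (i + 1) - 1)) := by
  rw [edgeRelaxation_eq_setOf]
  exact volume_setOf_mem_and_forall_mem_Icc measurableSet_Icc
    (f := fun (i : Fin (n + 1)) (x : Fin (n + 1) → ℝ) => max 0 (x i + x (i + 1) - 1))
    (g := fun i (x : Fin (n + 1) → ℝ) => min (x i) (x (i + 1))) (by fun_prop) (by fun_prop)

theorem volume_edgeRelaxation (n : ℕ) :
    volume (edgeRelaxation n) = 2⁻¹ ^ (n + 1) * volume (cyclicZigzag n) := by
  have htent : MeasurePreserving (fun (x : Fin (n + 1) → ℝ) i => tent (x i))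
      (volume.restrict (Set.Icc 0 1)) (volume.restrict (Set.Icc 0 1)) := by
    rw [← Set.pi_univ_Icc, volume_pi, Measure.restrict_pi_pi]
    exact measurePreserving_pi _ _ fun _ => measurePreserving_tent
  have hscale : ∀ x : Fin (n + 1) → ℝ, ∏ i, ENNReal.ofReal
      (min (x i) (x (i + 1)) - max 0 (x i + x (i + 1) - 1)) =
        2⁻¹ ^ (n + 1) * ∏ i, ENNReal.ofReal (min (tent (x i)) (tent (x (i + 1)))) := by
    intro x
    simp only [min_sub_max_eq_half_min_tent, ENNReal.ofReal_mul (inv_nonneg.2 zero_le_two),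
      Finset.prod_mul_distrib, Finset.prod_const, Finset.card_univ, Fintype.card_fin,
      ENNReal.ofReal_inv_of_pos two_pos, ENNReal.ofReal_ofNat]
  simp only [volume_edgeRelaxation_eq_lintegral, volume_cyclicZigzag_eq_lintegral, hscale]
  rw [lintegral_const_mul _ (by fun_prop), ← htent.lintegral_comp
    (f := fun x => ∏ i, ENNReal.ofReal (min (x i) (x (i + 1)))) (by fun_prop)]

end Relaxation

section LinearExtension

variable {n : ℕ}

/-- Linear extensions of the cyclic zigzag poset, with `Sum.inl i` the position of `x i` and
`Sum.inr i` that of `y i`. The order is reversed: larger coordinates get smaller labels. -/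
def IsCyclicAlternating (σ : Fin (n + 1) ⊕ Fin (n + 1) ≃ Fin (2 * n + 1 + 1)) : Prop :=
  ∀ i, σ (.inl i) < σ (.inr i) ∧ σ (.inl (i + 1)) < σ (.inr i)

lemma volume_cyclicZigzag_eq_card (n : ℕ) : volume (cyclicZigzag n) =
    Nat.card {σ // IsCyclicAlternating (n := n) σ} / ((2 * n + 1 + 1).factorial : ENNReal) := by
  let S : Set (Fin (n + 1) ⊕ Fin (n + 1) → ℝ) := {w | w ∈ Set.Icc 0 1 ∧
    ∀ i, w (.inr i) ≤ w (.inl i) ∧ w (.inr i) ≤ w (.inl (i + 1))}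
  have hS : MeasurableSet S := by
    refine measurableSet_Icc.inter (measurableSet_setOfPred.2 (Measurable.forall fun i => ?_))
    have hle : ∀ j k : Fin (n + 1) ⊕ Fin (n + 1),
        MeasurableSet {w : Fin (n + 1) ⊕ Fin (n + 1) → ℝ | w j ≤ w k} :=
      fun j k => measurableSet_le (measurable_pi_apply j) (measurable_pi_apply k)
    exact measurableSet_setOfPred.1 ((hle _ _).inter (hle _ _))
  have hpre : cyclicZigzag n = (fun p => Sum.elim p.1 p.2) ⁻¹' S := by
    ext p
    simp only [cyclicZigzag, S, Set.mem_preimage, Set.mem_ofPred_eq, Set.mem_Icc, Pi.le_def,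
      Sum.forall, Sum.elim_inl, Sum.elim_inr, Pi.zero_apply, Pi.one_apply, le_min_iff]
    constructor
    · rintro ⟨⟨h0, h1⟩, h⟩
      exact ⟨⟨⟨h0, fun i => (h i).1⟩, h1, fun i => (h i).2.1.trans (h1 i)⟩, fun i => (h i).2⟩
    · rintro ⟨⟨⟨h0, h0'⟩, h1, -⟩, h⟩
      exact ⟨⟨h0, h1⟩, fun i => ⟨h0' i, h i⟩⟩
  rw [hpre, measurePreserving_sumElim.measure_preimage hS.nullMeasurableSet]
  refine volume_eq_card_div_factorial (by simp; omega) (fun w hw => hw.1) fun σ w hw => ?_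
  have hcube : w ∈ Set.Icc 0 1 := ⟨fun i => (hw.1 i).1.le, fun i => (hw.1 i).2.le⟩
  simp only [S, IsCyclicAlternating, Set.mem_ofPred_eq, hcube, true_and, ← not_lt,
    apply_lt_apply_iff_of_mem_orderSimplex hw]
  simp only [not_lt, (σ.injective.ne Sum.inl_ne_inr).le_iff_lt]

lemma IsCyclicAlternating.exists_inl_eq_zero
    {σ : Fin (n + 1) ⊕ Fin (n + 1) ≃ Fin (2 * n + 1 + 1)} (hσ : IsCyclicAlternating σ) :
    ∃ i, σ (.inl i) = 0 := by
  obtain ⟨i | i, hi⟩ := σ.surjective 0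
  · exact ⟨i, hi⟩
  · exact absurd (hi ▸ (hσ i).1) (Fin.not_lt_zero _)

lemma card_isCyclicAlternating_inl_eq_zero (k : Fin (n + 1)) :
    Nat.card {σ // IsCyclicAlternating (n := n) σ ∧ σ (.inl k) = 0} =
      Nat.card {σ // IsCyclicAlternating (n := n) σ ∧ σ (.inl 0) = 0} := by
  let rotation := Equiv.sumCongr (Equiv.addRight k) (Equiv.addRight k)
  refine Nat.card_congr (Equiv.subtypeEquiv (Equiv.equivCongr rotation.symm (.refl _)) fun σ => ?_)
  simp only [IsCyclicAlternating, rotation, Equiv.equivCongr_apply_apply, Equiv.symm_symm,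
    Equiv.sumCongr_apply, Sum.map_inl, Sum.map_inr, Equiv.coe_addRight, Equiv.refl_apply, zero_add,
    add_right_comm _ 1 k]
  rw [(Equiv.addRight k).forall_congr_left
    (p := fun i => σ (.inl (i + k)) < σ (.inr (i + k)) ∧ σ (.inl (i + k + 1)) < σ (.inr (i + k)))]
  simp

lemma card_isCyclicAlternating : Nat.card {σ // IsCyclicAlternating (n := n) σ} =
    (n + 1) * Nat.card {σ // IsCyclicAlternating (n := n) σ ∧ σ (.inl 0) = 0} := by
  choose f hf using fun σ : {σ // IsCyclicAlternating (n := n) σ} => σ.2.exists_inl_eq_zero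
  have hfiber : ∀ k σ, f σ = k ↔ σ.1 (.inl k) = 0 := fun k σ => by
    rw [← hf σ, σ.1.injective.eq_iff, Sum.inl.injEq, eq_comm]
  calc Nat.card {σ // IsCyclicAlternating (n := n) σ}
      = ∑ k, Nat.card {σ // f σ = k} := by
        rw [← Nat.card_sigma, Nat.card_congr (Equiv.sigmaFiberEquiv f)]
    _ = ∑ k, Nat.card {σ // IsCyclicAlternating (n := n) σ ∧ σ (.inl k) = 0} :=
        Finset.sum_congr rfl fun k _ => Nat.card_congr <|
          (Equiv.subtypeEquivRight (hfiber k)).trans <|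
            Equiv.subtypeSubtypeEquivSubtypeInter IsCyclicAlternating fun σ => σ (.inl k) = 0
    _ = _ := by simp [card_isCyclicAlternating_inl_eq_zero]

lemma isCyclicAlternating_iff {σ : Fin (n + 1) ⊕ Fin (n + 1) ≃ Fin (2 * n + 1 + 1)}
    (h0 : σ (.inl 0) = 0) : IsCyclicAlternating σ ↔
      ∀ i : Fin n, σ (.inl i.succ) < σ (.inr i.castSucc) ∧ σ (.inl i.succ) < σ (.inr i.succ) := by
  have hpos : ∀ i, σ (.inl 0) < σ (.inr i) := fun i =>
    h0 ▸ Fin.pos_iff_ne_zero.2 fun hi => Sum.inr_ne_inl (σ.injective (hi.trans h0.symm))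
  rw [IsCyclicAlternating, forall_and, forall_and, and_comm, Fin.forall_fin_succ',
    Fin.forall_fin_succ]
  simp [hpos, Fin.coeSucc_eq_succ]

/-- The interleaving `x 0, y 0, x 1, y 1, …` of the vertices of the cyclic zigzag poset. -/
def interleave (n : ℕ) : Fin (n + 1) ⊕ Fin (n + 1) ≃ Fin (2 * n + 1 + 1) :=
  .ofBijective (Sum.elim (fun i => ⟨2 * i, by omega⟩) fun i => ⟨2 * i + 1, by omega⟩) <|
    (Fintype.bijective_iff_injective_and_card _).2
      ⟨by rintro (i | i) (j | j) h <;> simp [Fin.ext_iff] at h ⊢ <;> omega, by simp; omega⟩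

lemma eulerNumber_eq_card (n : ℕ) : eulerNumber (2 * n + 1) =
    Nat.card {τ : Equiv.Perm (Fin (2 * n + 1)) // ∀ i : Fin n,
      τ ⟨2 * i + 1, by omega⟩ < τ ⟨2 * i, by omega⟩ ∧
      τ ⟨2 * i + 1, by omega⟩ < τ ⟨2 * i + 2, by omega⟩} := by
  refine Nat.card_congr (Equiv.subtypeEquivRight fun τ => ⟨fun h i => ?_, fun h i hi => ?_⟩)
  · exact ⟨(h (2 * i) (by omega)).1 (by simp), (h (2 * i + 1) (by omega)).2 (by simp)⟩
  · constructor
    · rintro ⟨j, rfl⟩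
      simpa [two_mul] using (h ⟨j, by omega⟩).1
    · rintro ⟨j, rfl⟩
      exact (h ⟨j, by omega⟩).2

/-- The labelling with `x 0` labelled `0` whose labels after `x 0`, in interleaved order, are given
by `τ`, raised by one. -/
def interleavedLabelling (τ : Equiv.Perm (Fin (2 * n + 1))) :
    Fin (n + 1) ⊕ Fin (n + 1) ≃ Fin (2 * n + 1 + 1) :=
  (interleave n).trans (Equiv.Perm.decomposeFin.symm (0, τ))

lemma interleavedLabelling_inl_zero (τ : Equiv.Perm (Fin (2 * n + 1))) :
    interleavedLabelling τ (.inl 0) = 0 :=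
  Equiv.Perm.decomposeFin_symm_apply_zero 0 τ

lemma interleavedLabelling_of_interleave_eq_succ (τ : Equiv.Perm (Fin (2 * n + 1)))
    {v : Fin (n + 1) ⊕ Fin (n + 1)} {j : Fin (2 * n + 1)} (h : interleave n v = j.succ) :
    interleavedLabelling τ v = (τ j).succ := by
  simp [interleavedLabelling, h]

lemma interleavedLabelling_injective :
    Function.Injective (interleavedLabelling (n := n)) := by
  intro τ τ' h
  have hext : Equiv.Perm.decomposeFin.symm (0, τ) = Equiv.Perm.decomposeFin.symm (0, τ') :=
    Equiv.ext fun a => by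
      simpa [interleavedLabelling] using Equiv.congr_fun h ((interleave n).symm a)
  exact congrArg Prod.snd (Equiv.Perm.decomposeFin.symm.injective hext)

lemma exists_interleavedLabelling_eq {σ : Fin (n + 1) ⊕ Fin (n + 1) ≃ Fin (2 * n + 1 + 1)}
    (h0 : σ (.inl 0) = 0) : ∃ τ, interleavedLabelling τ = σ := by
  obtain ⟨⟨p, τ⟩, hτ⟩ := Equiv.Perm.decomposeFin.symm.surjective ((interleave n).symm.trans σ)
  have hp : p = 0 := by
    rw [← Equiv.Perm.decomposeFin_symm_apply_zero p τ, hτ]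
    exact (congrArg σ ((interleave n).symm_apply_apply (.inl 0))).trans h0
  refine ⟨τ, ?_⟩
  rw [interleavedLabelling, ← hp, hτ]
  ext
  simp

lemma isCyclicAlternating_interleavedLabelling_iff {τ : Equiv.Perm (Fin (2 * n + 1))} :
    IsCyclicAlternating (interleavedLabelling τ) ↔ ∀ i : Fin n,
      τ ⟨2 * i + 1, by omega⟩ < τ ⟨2 * i, by omega⟩ ∧
      τ ⟨2 * i + 1, by omega⟩ < τ ⟨2 * i + 2, by omega⟩ := by
  rw [isCyclicAlternating_iff (interleavedLabelling_inl_zero τ)]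
  refine forall_congr' fun i => ?_
  have hx : interleavedLabelling τ (.inl i.succ) = (τ ⟨2 * i + 1, by omega⟩).succ :=
    interleavedLabelling_of_interleave_eq_succ τ rfl
  have hy : interleavedLabelling τ (.inr i.castSucc) = (τ ⟨2 * i, by omega⟩).succ :=
    interleavedLabelling_of_interleave_eq_succ τ rfl
  have hy' : interleavedLabelling τ (.inr i.succ) = (τ ⟨2 * i + 2, by omega⟩).succ :=
    interleavedLabelling_of_interleave_eq_succ τ rfl
  rw [hx, hy, hy', Fin.succ_lt_succ_iff, Fin.succ_lt_succ_iff]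

lemma card_isCyclicAlternating_zero_eq_eulerNumber (n : ℕ) :
    Nat.card {σ // IsCyclicAlternating (n := n) σ ∧ σ (.inl 0) = 0} =
      eulerNumber (2 * n + 1) := by
  rw [eulerNumber_eq_card]
  refine (Nat.card_eq_of_bijective (fun τ => ⟨interleavedLabelling τ.1,
    isCyclicAlternating_interleavedLabelling_iff.2 τ.2, interleavedLabelling_inl_zero τ.1⟩)
    ⟨fun τ τ' h => ?_, fun ⟨σ, hσ, h0⟩ => ?_⟩).symm
  · exact Subtype.ext (interleavedLabelling_injective (Subtype.mk.inj h))
  · obtain ⟨τ, rfl⟩ := exists_interleavedLabelling_eq h0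
    exact ⟨⟨τ, isCyclicAlternating_interleavedLabelling_iff.1 hσ⟩, rfl⟩

theorem volume_cyclicZigzag_eq_eulerNumber (n : ℕ) : volume (cyclicZigzag n) =
    ((n + 1) * eulerNumber (2 * n + 1) : ℕ) / ((2 * (n + 1)).factorial : ENNReal) := by
  rw [volume_cyclicZigzag_eq_card, card_isCyclicAlternating,
    card_isCyclicAlternating_zero_eq_eulerNumber, Nat.mul_succ]

end LinearExtension

/-- `vol P(C_m) = m * A_{2m-1} / (2^m * (2m)!) - 2^(m-2) / (2m)!`. -/
theorem volume_BQPSet_cycle (m : ℕ) (hm : 3 ≤ m) :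
    volume (BQPSet (cycleG m)) =
      ((m * eulerNumber (2 * m - 1) : ℕ) : ENNReal) /
          ((2 : ENNReal) ^ m * (Nat.factorial (2 * m) : ENNReal)) -
        (2 : ENNReal) ^ (m - 2) / (Nat.factorial (2 * m) : ENNReal) := by
  obtain ⟨n, rfl⟩ : ∃ n, m = n + 2 := ⟨m - 2, by omega⟩
  have hsub : 2 * (n + 2) - 1 = 2 * (n + 1) + 1 := by omega
  rw [volume_BQPSet_cycleG_succ (by omega), volume_cyclePolytope, volume_edgeRelaxation,
    volume_cyclicZigzag_eq_eulerNumber, hsub, Nat.add_sub_cancel]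
  congr 1
  · rw [div_eq_mul_inv, div_eq_mul_inv, ENNReal.mul_inv (by simp) (by simp), ENNReal.inv_pow,
      mul_left_comm]
  · rw [div_eq_mul_inv, ← mul_assoc, pow_succ, mul_assoc (2 ^ n),
      ENNReal.mul_inv_cancel two_ne_zero ENNReal.ofNat_ne_top, mul_one]
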